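/- arXiv:1409.5306 — 2 statements merged into one kernel-verified Lean document; each statement's English description precedes it below -/
import Mathlib

section
/- For every concurrent game structure with boolean reward function: X* = Almost₁(LimInfAvg(1)) = Almost₁(LimSupAvg(1)) = ⋂_{ε>0} Almost₁(LimInfAvg(1−ε)) = ⋂_{ε>0} Almost₁(LimSupAvg(1−ε)); and S∖X* = Positive₂({ρ: LimInfAvg(ρ)<1}) = Positive₂({ρ: LimSupAvg(ρ)<1}) = ⋃_{c>0} Positive₂(LimInfAvg_≤(1−c)) = ⋃_{c>0} Positive₂(LimSupAvg_≤(1−c)), where X* = νX.μY.νZ.ASP(X,Y,Z). -/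
/-!
The theorem reduces to two facts. (A) Player 1 has one strategy under which, from every state of
`X*` and against every opponent, the average reward tends to `1` almost surely. (B) There are a
constant `c > 0` and one strategy of player 2 under which, from every state outside `X*` and against
every opponent, the loss `∑ (1 - r)` grows at least like `c * n - C` with positive probability. All
eight equalities follow by monotonicity of the events and measurability of the limits of averages.

Probabilities of plays are handled through the recursively defined expectation `CGS.EX` over finite
words: `CGS.pr_le_EX` is Markov's inequality, `CGS.pr_add_compl` the additivity on measurable sets
(via the Carathéodory criterion), and `CGS.stepW_mul_pr_le` relates an event to its continuations.

For (A), `CGS.exists_levels` presents `X*` as an increasing sequence of levels, each the greatest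
fixpoint in `Z` relative to the previous level. For a tolerance `η`, player 1 plays a good action
with probability `1 - ε` and a uniform allowed action otherwise. A non-bad answer gives reward one
without leaving the level; a bad answer reaches a lower level with probability at least a multiple
of `ε`. With a potential growing fast enough along the levels (`CGS.exists_local`), the excess loss
`1 - η - r` minus the gain of potential has nonpositive drift. Letting `η` decrease to zero very
slowly, an exponential moment bound (`CGS.EX_exp_le`) and Borel–Cantelli yield
`CGS.exists_winning`.

For (B), `CGS.exists_colevels` presents the complement of `X*` as the union of the strata
`Xs k ∖ Xs (k + 1)` of the outer iteration. On a stratum every allowed action of player 1 has a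
non-bad answer that either yields reward zero or decreases a rank inside the stratum. Player 2 plays
non-bad actions uniformly, plus all actions with probability `2⁻¹ ^ (t + 2)` at time `t`. Either
player 1 uses an action that is not allowed, and then an earlier stratum is reached with positive
probability, or the play stays in the stratum forever with probability bounded below, and there the
loss is linear by an exponential bound (`CGS.Stratum.pr_compl_le`). Induction on `k` gives
`CGS.exists_spoiling`.
-/

open scoped Classical ENNReal
open Filter

/-- A concurrent stochastic game structure `G = (S, A, Γ₁, Γ₂, δ)` together with a
boolean reward function `r : S × A × A → {0,1}`. -/
structure CGS where
  /-- finite state space -/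
  S : Type
  /-- finite action space -/
  A : Type
  [fintypeS : Fintype S]
  [fintypeA : Fintype A]
  [decS : DecidableEq S]
  [decA : DecidableEq A]
  [nonemptyS : Nonempty S]
  /-- moves available to player 1 -/
  moves1 : S → Finset A
  /-- moves available to player 2 -/
  moves2 : S → Finset A
  moves1_nonempty : ∀ s, (moves1 s).Nonempty
  moves2_nonempty : ∀ s, (moves2 s).Nonempty
  /-- probabilistic transition function -/
  trans : S → A → A → PMF S
  /-- reward function -/
  reward : S → A → A → ℝ
  /-- the reward function is boolean -/
  reward_bool : ∀ s a b, reward s a b = 0 ∨ reward s a b = 1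

attribute [instance] CGS.fintypeS CGS.fintypeA CGS.decS CGS.decA CGS.nonemptyS

namespace CGS

variable (G : CGS)

/-- One round: a state together with the actions chosen by the two players. -/
abbrev Move := G.S × G.A × G.A

/-- A finite history. -/
abbrev Hist := List G.Move

/-- A play (we allow arbitrary infinite sequences; invalid ones get probability 0). -/
abbrev Play := ℕ → G.Move

/-- A (behavioral) strategy whose moves are restricted to `moves`. -/
structure Strategy (moves : G.S → Finset G.A) where
  play : G.Hist → G.S → PMF G.A
  play_mem : ∀ h s a, play h s a ≠ 0 → a ∈ moves s

/-- A strategy for player 1. -/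
abbrev Strategy1 := G.Strategy G.moves1
/-- A strategy for player 2. -/
abbrev Strategy2 := G.Strategy G.moves2

variable {G}

/-- A stationary (memoryless) strategy. -/
def Strategy.Stationary {mv : G.S → Finset G.A} (σ : G.Strategy mv) : Prop :=
  ∀ h h' s, σ.play h s = σ.play h' s

/-- A Markov strategy: depends only on the length of the history and current state. -/
def Strategy.Markov {mv : G.S → Finset G.A} (σ : G.Strategy mv) : Prop :=
  ∀ h h' s, h.length = h'.length → σ.play h s = σ.play h' s

/-- The patience of a strategy: the inverse of the minimum nonzero probability
assigned to an action. -/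
noncomputable def Strategy.patience {mv : G.S → Finset G.A} (σ : G.Strategy mv) : ℝ≥0∞ :=
  ⨆ h, ⨆ s, ⨆ a, if σ.play h s a = 0 then 0 else (σ.play h s a)⁻¹

/-- Probability that the play follows exactly the finite prefix `w`, starting at
state `s` after past history `h`, when the players use `σ1` and `σ2`. -/
noncomputable def prefProb (σ1 : G.Strategy1) (σ2 : G.Strategy2) :
    G.Hist → G.S → List G.Move → ℝ≥0∞
  | _, _, [] => 1
  | h, s, (t, a, b) :: w =>
      if t = s then
        σ1.play h s a * σ2.play h s b *
          (match w with
            | [] => 1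
            | (t', _, _) :: _ =>
                G.trans s a b t' * prefProb σ1 σ2 (h ++ [(s, a, b)]) t' w)
      else 0

/-- The cylinder of plays extending a given finite prefix. -/
def cyl (n : ℕ) (w : Fin n → G.Move) : Set G.Play := {ρ | ∀ i : Fin n, ρ i.1 = w i}

/-- Pre-measure of a set of plays: the infimum, over resolutions `n`, of the total
probability of the length-`n` prefixes meeting the set. -/
noncomputable def preMeas (σ1 : G.Strategy1) (σ2 : G.Strategy2) (s : G.S)
    (U : Set G.Play) : ℝ≥0∞ :=
  ⨅ n : ℕ, ∑ w : Fin n → G.Move,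
    if (cyl n w ∩ U).Nonempty then prefProb σ1 σ2 [] s (List.ofFn w) else 0

lemma preMeas_empty (σ1 : G.Strategy1) (σ2 : G.Strategy2) (s : G.S) :
    preMeas σ1 σ2 s (∅ : Set G.Play) = 0 := by
  simp [preMeas]

/-- The probability distribution over plays from `s` under `σ1, σ2`, obtained by the
Carathéodory construction from cylinder probabilities (this agrees with the
Ionescu–Tulcea measure on all measurable sets). -/
noncomputable def prOuter (σ1 : G.Strategy1) (σ2 : G.Strategy2) (s : G.S) :
    MeasureTheory.OuterMeasure G.Play :=
  MeasureTheory.OuterMeasure.ofFunction (preMeas σ1 σ2 s) (preMeas_empty σ1 σ2 s)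

/-- `Pr_s^{σ1,σ2}(Φ)`. -/
noncomputable def pr (σ1 : G.Strategy1) (σ2 : G.Strategy2) (s : G.S)
    (Φ : Set G.Play) : ℝ≥0∞ :=
  prOuter σ1 σ2 s Φ

variable (G)

/-- Average reward over the first `n` rounds of a play. -/
noncomputable def avg (ρ : G.Play) (n : ℕ) : ℝ :=
  (∑ i ∈ Finset.range n, G.reward (ρ i).1 (ρ i).2.1 (ρ i).2.2) / n

/-- `LimInfAvg` of a play. -/
noncomputable def limInfAvg (ρ : G.Play) : ℝ := Filter.atTop.liminf (G.avg ρ)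

/-- `LimSupAvg` of a play. -/
noncomputable def limSupAvg (ρ : G.Play) : ℝ := Filter.atTop.limsup (G.avg ρ)

/-- The event `LimInfAvg(λ) = {ρ : LimInfAvg(ρ) ≥ λ}`. -/
def evLimInfAvgGe (lam : ℝ) : Set G.Play := {ρ | lam ≤ G.limInfAvg ρ}
/-- The event `LimSupAvg(λ) = {ρ : LimSupAvg(ρ) ≥ λ}`. -/
def evLimSupAvgGe (lam : ℝ) : Set G.Play := {ρ | lam ≤ G.limSupAvg ρ}
/-- The event `{ρ : LimInfAvg(ρ) ≤ λ}`. -/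
def evLimInfAvgLe (lam : ℝ) : Set G.Play := {ρ | G.limInfAvg ρ ≤ lam}
/-- The event `{ρ : LimSupAvg(ρ) ≤ λ}`. -/
def evLimSupAvgLe (lam : ℝ) : Set G.Play := {ρ | G.limSupAvg ρ ≤ lam}
/-- The event `{ρ : LimInfAvg(ρ) < λ}`. -/
def evLimInfAvgLt (lam : ℝ) : Set G.Play := {ρ | G.limInfAvg ρ < lam}
/-- The event `{ρ : LimSupAvg(ρ) < λ}`. -/
def evLimSupAvgLt (lam : ℝ) : Set G.Play := {ρ | G.limSupAvg ρ < lam}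

/-- The safety event: all states of the play lie in `F`. -/
def safe (F : Set G.S) : Set G.Play := {ρ | ∀ i, (ρ i).1 ∈ F}

/-- Almost-sure winning set for player 1. -/
def Almost1 (Φ : Set G.Play) : Set G.S :=
  {s | ∃ σ1 : G.Strategy1, ∀ σ2 : G.Strategy2, pr σ1 σ2 s Φ = 1}
/-- Positive winning set for player 1. -/
def Positive1 (Φ : Set G.Play) : Set G.S :=
  {s | ∃ σ1 : G.Strategy1, ∀ σ2 : G.Strategy2, 0 < pr σ1 σ2 s Φ}
/-- Almost-sure winning set for player 2. -/
def Almost2 (Φ : Set G.Play) : Set G.S :=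
  {s | ∃ σ2 : G.Strategy2, ∀ σ1 : G.Strategy1, pr σ1 σ2 s Φ = 1}
/-- Positive winning set for player 2. -/
def Positive2 (Φ : Set G.Play) : Set G.S :=
  {s | ∃ σ2 : G.Strategy2, ∀ σ1 : G.Strategy1, 0 < pr σ1 σ2 s Φ}

/-- `n`, the number of states. -/
def nS : ℕ := Fintype.card G.S

/-- `m`, the maximal number of actions available to a player at a state. -/
def mA : ℕ := Finset.univ.sup fun s => max (G.moves1 s).card (G.moves2 s).card

/-- `δ_min`, the minimum nonzero transition probability. -/
noncomputable def deltaMin : ℝ :=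
  sInf {x : ℝ | 0 < x ∧ ∃ s a b t, a ∈ G.moves1 s ∧ b ∈ G.moves2 s ∧
    ((G.trans s a b) t).toReal = x}

end CGS

namespace CGS

variable (G : CGS)

/-- `Allow₁(s,X)`: player-1 actions that keep the play inside `X`. -/
def allow1 (s : G.S) (X : Set G.S) : Set G.A :=
  {a | a ∈ G.moves1 s ∧ ∀ b ∈ G.moves2 s, (G.trans s a b).support ⊆ X}

/-- `Bad₂(s,X,Y)`. -/
def bad2 (s : G.S) (X Y : Set G.S) : Set G.A :=
  {b | b ∈ G.moves2 s ∧ ∃ a ∈ G.allow1 s X, ((G.trans s a b).support ∩ Y).Nonempty}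

/-- `Good₁(s,X,Y,Z)`. -/
def good1 (s : G.S) (X Y Z : Set G.S) : Set G.A :=
  {a | a ∈ G.allow1 s X ∧ ∀ b ∈ G.moves2 s, b ∉ G.bad2 s X Y →
      (G.trans s a b).support ⊆ Z ∧ G.reward s a b = 1}

/-- The predecessor operator `ASP(X,Y,Z)`. -/
def ASP (X Y Z : Set G.S) : Set G.S := {s | (G.good1 s X Y Z).Nonempty}

/-- Greatest fixpoint (ν) of a monotone operator on sets, via Knaster–Tarski. -/
def gfpS {α : Type*} (f : Set α → Set α) : Set α := ⋃₀ {X | X ⊆ f X}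

/-- Least fixpoint (μ) of a monotone operator on sets, via Knaster–Tarski. -/
def lfpS {α : Type*} (f : Set α → Set α) : Set α := ⋂₀ {X | f X ⊆ X}

/-- `X* = νX. μY. νZ. ASP(X,Y,Z)`. -/
def Xstar : Set G.S :=
  gfpS fun X => lfpS fun Y => gfpS fun Z => G.ASP X Y Z

/-- `Y* = μY. νZ. ASP(S,Y,Z)`. -/
def Ystar : Set G.S :=
  lfpS fun Y => gfpS fun Z => G.ASP Set.univ Y Z

end CGS

namespace CGS

variable {G : CGS}

/-! ### Finite-horizon expectations -/

/-- The continuation of a strategy after the round `m` has been played. -/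
def Strategy.shift {mv : G.S → Finset G.A} (σ : G.Strategy mv) (m : G.Move) : G.Strategy mv where
  play h s := σ.play (m :: h) s
  play_mem h s a := σ.play_mem (m :: h) s a

lemma prefProb_shift (σ1 : G.Strategy1) (σ2 : G.Strategy2) (m : G.Move) (w : List G.Move) :
    ∀ (h : G.Hist) (s : G.S),
      prefProb σ1 σ2 (m :: h) s w = prefProb (σ1.shift m) (σ2.shift m) h s w := by
  induction w with
  | nil => intro h s; simp [prefProb]
  | cons x w ih =>
    intro h s
    obtain ⟨t, a, b⟩ := x
    cases w with
    | nil => simp [prefProb, Strategy.shift]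
    | cons y w =>
      obtain ⟨t', a', b'⟩ := y
      rw [prefProb, prefProb]
      rw [← ih, List.cons_append]
      rfl

lemma sum_pmf {α : Type*} [Fintype α] (p : PMF α) : ∑ x, p x = 1 := by
  rw [← tsum_fintype (L := .unconditional _)]; exact p.tsum_coe

/-- Uniform recursion for `prefProb`: summing over the next state removes the special
treatment of the last round. -/
lemma prefProb_cons (σ1 : G.Strategy1) (σ2 : G.Strategy2) (s t : G.S) (a b : G.A)
    (w : List G.Move) :
    prefProb σ1 σ2 [] s ((t, a, b) :: w) =
      if t = s then σ1.play [] s a * σ2.play [] s b *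
        ∑ t', G.trans s a b t' *
          prefProb (σ1.shift (s, a, b)) (σ2.shift (s, a, b)) [] t' w
      else 0 := by
  cases w with
  | nil => simp [prefProb, sum_pmf]
  | cons y w =>
    obtain ⟨t₁, a₁, b₁⟩ := y
    rw [prefProb]
    congr 2
    rw [Finset.sum_eq_single t₁]
    · rw [← prefProb_shift]; rfl
    · intro t' _ hne
      rw [prefProb.eq_def]
      simp [hne.symm]
    · simp

/-- The law of `(a, b, t)` for the first round played from `s`: the two actions and the
successor state. -/
noncomputable def stepW (σ1 : G.Strategy1) (σ2 : G.Strategy2) (s : G.S) (x : G.A × G.A × G.S) :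
    ℝ≥0∞ :=
  σ1.play [] s x.1 * σ2.play [] s x.2.1 * G.trans s x.1 x.2.1 x.2.2

lemma stepW_sum (σ1 : G.Strategy1) (σ2 : G.Strategy2) (s : G.S) :
    ∑ x, stepW σ1 σ2 s x = 1 := by
  simp only [stepW, Fintype.sum_prod_type, ← Finset.mul_sum, sum_pmf, mul_one]

/-- Expectation of a function `g` of the first `n` rounds of the play started in `s`. -/
noncomputable def EX : ℕ → G.Strategy1 → G.Strategy2 → G.S → (List G.Move → ℝ≥0∞) → ℝ≥0∞
  | 0, _, _, _, g => g []
  | n + 1, σ1, σ2, s, g => ∑ x : G.A × G.A × G.S, stepW σ1 σ2 s x *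
      EX n (σ1.shift (s, x.1, x.2.1)) (σ2.shift (s, x.1, x.2.1)) x.2.2
        (fun w => g ((s, x.1, x.2.1) :: w))

lemma sum_prefProb_eq_EX (n : ℕ) : ∀ (σ1 : G.Strategy1) (σ2 : G.Strategy2) (s : G.S)
    (g : List G.Move → ℝ≥0∞),
    ∑ w : Fin n → G.Move, prefProb σ1 σ2 [] s (List.ofFn w) * g (List.ofFn w)
      = EX n σ1 σ2 s g := by
  induction n with
  | zero => intro σ1 σ2 s g; simp [prefProb, EX]
  | succ n ih =>
    intro σ1 σ2 s g
    rw [EX, ← (Fin.consEquiv (fun _ => G.Move)).sum_comp]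
    simp only [Fin.consEquiv, Equiv.coe_fn_mk, List.ofFn_succ, Fin.cons_zero, Fin.cons_succ,
      Fintype.sum_prod_type, prefProb_cons]
    rw [Finset.sum_eq_single s]
    · refine Finset.sum_congr rfl fun a _ => Finset.sum_congr rfl fun b _ => ?_
      simp only [if_true, stepW, ← ih, Finset.mul_sum, Finset.sum_mul]
      rw [Finset.sum_comm]
      refine Finset.sum_congr rfl fun t _ => Finset.sum_congr rfl fun w _ => ?_
      ring
    · intro t _ hne; simp [hne]
    · simp

lemma EX_mono (n : ℕ) : ∀ (σ1 : G.Strategy1) (σ2 : G.Strategy2) (s : G.S)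
    (g g' : List G.Move → ℝ≥0∞), (∀ w, w.length = n → g w ≤ g' w) →
    EX n σ1 σ2 s g ≤ EX n σ1 σ2 s g' := by
  induction n with
  | zero => intro σ1 σ2 s g g' h; exact h [] rfl
  | succ n ih =>
    intro σ1 σ2 s g g' h
    rw [EX, EX]
    gcongr with x
    exact ih _ _ _ _ _ fun w hw => h _ (by simp [hw])

lemma EX_const (n : ℕ) : ∀ (σ1 : G.Strategy1) (σ2 : G.Strategy2) (s : G.S) (c : ℝ≥0∞),
    EX n σ1 σ2 s (fun _ => c) = c := by
  induction n with
  | zero => intros; rfl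
  | succ n ih =>
    intro σ1 σ2 s c
    simp only [EX, ih, ← Finset.sum_mul, stepW_sum, one_mul]

lemma EX_add (n : ℕ) : ∀ (σ1 : G.Strategy1) (σ2 : G.Strategy2) (s : G.S)
    (g g' : List G.Move → ℝ≥0∞),
    EX n σ1 σ2 s (fun w => g w + g' w) = EX n σ1 σ2 s g + EX n σ1 σ2 s g' := by
  intro σ1 σ2 s g g'
  simp only [← sum_prefProb_eq_EX, mul_add, Finset.sum_add_distrib]

lemma EX_mul (n : ℕ) (σ1 : G.Strategy1) (σ2 : G.Strategy2) (s : G.S)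
    (g : List G.Move → ℝ≥0∞) (c : ℝ≥0∞) :
    EX n σ1 σ2 s (fun w => c * g w) = c * EX n σ1 σ2 s g := by
  simp only [← sum_prefProb_eq_EX, Finset.mul_sum]
  exact Finset.sum_congr rfl fun w _ => by ring

lemma EX_sum {ι : Type*} (I : Finset ι) (n : ℕ) (σ1 : G.Strategy1) (σ2 : G.Strategy2) (s : G.S)
    (g : ι → List G.Move → ℝ≥0∞) :
    EX n σ1 σ2 s (fun w => ∑ i ∈ I, g i w) = ∑ i ∈ I, EX n σ1 σ2 s (g i) := by
  simp only [← sum_prefProb_eq_EX, Finset.mul_sum]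
  rw [Finset.sum_comm]

lemma EX_succ_le (n : ℕ) : ∀ (σ1 : G.Strategy1) (σ2 : G.Strategy2) (s : G.S)
    (g g' : List G.Move → ℝ≥0∞), (∀ w m, g' (w ++ [m]) ≤ g w) →
    EX (n + 1) σ1 σ2 s g' ≤ EX n σ1 σ2 s g := by
  induction n with
  | zero =>
    intro σ1 σ2 s g g' h
    calc EX 1 σ1 σ2 s g' ≤ EX 1 σ1 σ2 s (fun _ => g []) := by
          refine EX_mono 1 _ _ _ _ _ fun w hw => ?_
          obtain ⟨m, rfl⟩ := List.length_eq_one_iff.1 hw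
          exact h [] m
      _ = _ := by rw [EX_const]; rfl
  | succ n ih =>
    intro σ1 σ2 s g g' h
    rw [EX, EX.eq_def (n + 1)]
    simp only
    gcongr with x
    exact ih _ _ _ _ _ fun w m => h (_ :: w) m

/-! ### The play measure -/

/-- `Pfx w ρ`: the finite word `w` is a prefix of the play `ρ`. -/
def Pfx : List G.Move → G.Play → Prop
  | [], _ => True
  | m :: w, ρ => ρ 0 = m ∧ Pfx w (fun i => ρ (i + 1))

lemma Pfx_append (w : List G.Move) (m : G.Move) : ∀ (ρ : G.Play),
    Pfx (w ++ [m]) ρ → Pfx w ρ := by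
  induction w with
  | nil => intro ρ _; trivial
  | cons x w ih => intro ρ h; exact ⟨h.1, ih _ h.2⟩

lemma Pfx_ofFn (n : ℕ) : ∀ (w : Fin n → G.Move) (ρ : G.Play),
    Pfx (List.ofFn w) ρ ↔ ρ ∈ cyl n w := by
  induction n with
  | zero => intro w ρ; simp [Pfx, cyl]
  | succ n ih =>
    intro w ρ
    rw [List.ofFn_succ, Pfx, ih]
    simp [cyl, Fin.forall_fin_succ]

lemma Pfx_iff (w : List G.Move) : ∀ (ρ : G.Play),
    Pfx w ρ ↔ ∀ i (h : i < w.length), ρ i = w[i] := by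
  induction w with
  | nil => intro ρ; simp [Pfx]
  | cons m w ih =>
    intro ρ
    rw [Pfx, ih]
    constructor
    · rintro ⟨h0, h1⟩ i hi
      cases i with
      | zero => exact h0
      | succ i => exact h1 i (by simpa using hi)
    · intro h
      exact ⟨h 0 (by simp), fun i hi => h (i + 1) (by simpa using hi)⟩

/-- Indicator of the words that are a prefix of some play in `U`. -/
noncomputable def ind (U : Set G.Play) (w : List G.Move) : ℝ≥0∞ :=
  if ∃ ρ ∈ U, Pfx w ρ then 1 else 0

lemma preMeas_eq (σ1 : G.Strategy1) (σ2 : G.Strategy2) (s : G.S) (U : Set G.Play) :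
    preMeas σ1 σ2 s U = ⨅ n : ℕ, EX n σ1 σ2 s (ind U) := by
  unfold preMeas
  congr 1 with n
  rw [← sum_prefProb_eq_EX]
  refine Finset.sum_congr rfl fun w _ => ?_
  have : (cyl n w ∩ U).Nonempty ↔ ∃ ρ ∈ U, Pfx (List.ofFn w) ρ := by
    constructor
    · rintro ⟨ρ, h1, h2⟩; exact ⟨ρ, h2, (Pfx_ofFn n w ρ).2 h1⟩
    · rintro ⟨ρ, h1, h2⟩; exact ⟨ρ, (Pfx_ofFn n w ρ).1 h2, h1⟩
  simp [ind, this]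

lemma EX_ind_antitone (σ1 : G.Strategy1) (σ2 : G.Strategy2) (s : G.S) (U : Set G.Play) :
    Antitone fun n => EX n σ1 σ2 s (ind U) := by
  refine antitone_nat_of_succ_le fun n => EX_succ_le n _ _ _ _ _ fun w m => ?_
  unfold ind
  split_ifs with h1 h2 <;> try simp
  obtain ⟨ρ, hρ, h⟩ := h1
  exact h2 ⟨ρ, hρ, Pfx_append _ _ _ h⟩

/-- Markov's inequality for events determined by the first `n` rounds. -/
lemma pr_le_EX (σ1 : G.Strategy1) (σ2 : G.Strategy2) (s : G.S) (U : Set G.Play) (n : ℕ)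
    (g : List G.Move → ℝ≥0∞)
    (hg : ∀ ρ ∈ U, ∀ w, w.length = n → Pfx w ρ → 1 ≤ g w) :
    pr σ1 σ2 s U ≤ EX n σ1 σ2 s g := by
  refine (MeasureTheory.OuterMeasure.ofFunction_le _).trans ?_
  rw [preMeas_eq]
  refine (iInf_le _ n).trans (EX_mono n _ _ _ _ _ fun w hw => ?_)
  unfold ind
  split_ifs with h
  · obtain ⟨ρ, h1, h2⟩ := h; exact hg ρ h1 w hw h2
  · simp

lemma pr_le_one (σ1 : G.Strategy1) (σ2 : G.Strategy2) (s : G.S) (U : Set G.Play) :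
    pr σ1 σ2 s U ≤ 1 := by
  refine (pr_le_EX σ1 σ2 s U 0 (fun _ => 1) (by simp)).trans ?_
  rw [EX_const]

lemma exists_Pfx (w : List G.Move) (d : G.Play) : ∃ ρ : G.Play, Pfx w ρ :=
  ⟨fun i => w.getD i (d i), (Pfx_iff w _).2 fun i h => by simp [h]⟩

/-- Total mass one: by compactness of the space of plays, a countable cover may be replaced
by a finite cover by cylinder sets of a common length. -/
lemma pr_univ (σ1 : G.Strategy1) (σ2 : G.Strategy2) (s : G.S) :
    pr σ1 σ2 s Set.univ = 1 := by
  refine le_antisymm (pr_le_one _ _ _ _) ?_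
  unfold pr prOuter
  rw [MeasureTheory.OuterMeasure.ofFunction_apply]
  refine le_iInf₂ fun U hU => ?_
  refine ENNReal.le_of_forall_pos_le_add fun ε hε hfin => ?_
  obtain ⟨e, he, hes⟩ := ENNReal.exists_pos_sum_of_countable (ENNReal.coe_pos.2 hε).ne' ℕ
  have hn : ∀ i, ∃ n, EX n σ1 σ2 s (ind (U i)) < preMeas σ1 σ2 s (U i) + e i := by
    intro i
    have hne : preMeas σ1 σ2 s (U i) ≠ ∞ := ne_top_of_le_ne_top hfin.ne (ENNReal.le_tsum i)
    have : preMeas σ1 σ2 s (U i) < preMeas σ1 σ2 s (U i) + e i :=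
      ENNReal.lt_add_right hne (ENNReal.coe_pos.2 (he i)).ne'
    nth_rewrite 1 [preMeas_eq] at this
    exact iInf_lt_iff.1 this
  choose n hn using hn
  let _ : TopologicalSpace G.Move := ⊥
  have : DiscreteTopology G.Move := ⟨rfl⟩
  let V : ℕ → Set G.Play := fun i => {ρ | ∃ ρ' ∈ U i, ∀ j < n i, ρ j = ρ' j}
  have hVo : ∀ i, IsOpen (V i) := by
    intro i
    have : V i = ⋃ ρ' ∈ U i, ⋂ j ∈ Finset.range (n i), {ρ | ρ j = ρ' j} := by
      ext ρ; simp [V]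
    rw [this]
    refine isOpen_biUnion fun ρ' _ => isOpen_biInter_finset fun j _ => ?_
    exact (isOpen_discrete ({ρ' j} : Set G.Move)).preimage
      (continuous_apply (A := fun _ : ℕ => G.Move) j)
  obtain ⟨I, hI⟩ := (isCompact_univ (X := G.Play)).elim_finite_subcover V hVo (by
    intro ρ hρ
    obtain ⟨i, hi⟩ := Set.mem_iUnion.1 (hU hρ)
    exact Set.mem_iUnion.2 ⟨i, ρ, hi, fun _ _ => rfl⟩)
  let N := I.sup n
  calc (1 : ℝ≥0∞) = EX N σ1 σ2 s (fun _ => 1) := (EX_const _ _ _ _ _).symm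
    _ ≤ EX N σ1 σ2 s (fun w => ∑ i ∈ I, ind (V i) w) := by
        refine EX_mono _ _ _ _ _ _ fun w hw => ?_
        obtain ⟨m₀⟩ : Nonempty G.Move := by
          obtain ⟨s⟩ := G.nonemptyS
          obtain ⟨a, _⟩ := G.moves1_nonempty s
          exact ⟨(s, a, a)⟩
        obtain ⟨ρ, hρ⟩ := exists_Pfx w (fun _ => m₀)
        obtain ⟨i, hi, hV⟩ := Set.mem_iUnion₂.1 (hI (Set.mem_univ ρ))
        refine le_trans ?_ (Finset.single_le_sum (f := fun i => ind (V i) w)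
          (fun _ _ => zero_le) hi)
        simp only [ind]
        rw [if_pos ⟨ρ, hV, hρ⟩]
    _ = ∑ i ∈ I, EX N σ1 σ2 s (ind (V i)) := EX_sum _ _ _ _ _ _
    _ ≤ ∑ i ∈ I, EX (n i) σ1 σ2 s (ind (V i)) :=
        Finset.sum_le_sum fun i hi => EX_ind_antitone σ1 σ2 s (V i) (Finset.le_sup hi)
    _ ≤ ∑ i ∈ I, EX (n i) σ1 σ2 s (ind (U i)) := by
        refine Finset.sum_le_sum fun i _ => EX_mono _ _ _ _ _ _ fun w hw => ?_
        unfold ind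
        split_ifs with h1 h2 <;> try simp
        obtain ⟨ρ, ⟨ρ', hρ', hj⟩, h⟩ := h1
        refine h2 ⟨ρ', hρ', (Pfx_iff w _).2 fun j hjw => ?_⟩
        rw [← hj j (hw ▸ hjw)]
        exact (Pfx_iff w _).1 h j hjw
    _ ≤ ∑ i ∈ I, (preMeas σ1 σ2 s (U i) + e i) :=
        Finset.sum_le_sum fun i _ => (hn i).le
    _ ≤ ∑' i, (preMeas σ1 σ2 s (U i) + e i) := ENNReal.sum_le_tsum _
    _ = ∑' i, preMeas σ1 σ2 s (U i) + ∑' i, (e i : ℝ≥0∞) := ENNReal.tsum_add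
    _ ≤ _ := by gcongr

/-- The σ-algebra on plays generated by the coordinates. -/
@[reducible] def playMS (G : CGS) : MeasurableSpace G.Play :=
  @MeasurableSpace.pi ℕ (fun _ => G.Move) (fun _ => ⊤)

lemma playMS_le (σ1 : G.Strategy1) (σ2 : G.Strategy2) (s : G.S) :
    playMS G ≤ (prOuter σ1 σ2 s).caratheodory := by
  refine iSup_le fun i => ?_
  rintro _ ⟨B, _, rfl⟩
  refine MeasureTheory.OuterMeasure.ofFunction_caratheodory fun t => ?_
  rw [preMeas_eq σ1 σ2 s t]
  refine le_iInf fun n => ?_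
  refine le_trans ?_ (EX_ind_antitone σ1 σ2 s t (le_max_left n (i + 1)))
  set N := max n (i + 1)
  rw [preMeas_eq, preMeas_eq]
  refine (add_le_add (iInf_le _ N) (iInf_le _ N)).trans ?_
  rw [← EX_add]
  refine EX_mono _ _ _ _ _ _ fun w hw => ?_
  have hi : i < w.length := by rw [hw]; exact lt_of_lt_of_le (Nat.lt_succ_self i) (le_max_right _ _)
  by_cases hB : w[i] ∈ B
  · have h2 : ind (t \ (fun ρ : G.Play => ρ i) ⁻¹' B) w = 0 := by
      refine if_neg ?_
      rintro ⟨ρ, hρ, h⟩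
      exact hρ.2 (by rw [Set.mem_preimage, (Pfx_iff w ρ).1 h i hi]; exact hB)
    simp only at *
    rw [h2, add_zero]
    unfold ind
    split_ifs with h1 h2 <;> try simp
    obtain ⟨ρ, hρ, h⟩ := h1
    exact h2 ⟨ρ, hρ.1, h⟩
  · have h2 : ind (t ∩ (fun ρ : G.Play => ρ i) ⁻¹' B) w = 0 := by
      refine if_neg ?_
      rintro ⟨ρ, hρ, h⟩
      exact hB (by rw [← (Pfx_iff w ρ).1 h i hi]; exact hρ.2)
    simp only at *
    rw [h2, zero_add]
    unfold ind
    split_ifs with h1 h2 <;> try simp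
    obtain ⟨ρ, hρ, h⟩ := h1
    exact h2 ⟨ρ, hρ.1, h⟩

lemma pr_add_compl (σ1 : G.Strategy1) (σ2 : G.Strategy2) (s : G.S) (Φ : Set G.Play)
    (hΦ : @MeasurableSet _ (playMS G) Φ) : pr σ1 σ2 s Φ + pr σ1 σ2 s Φᶜ = 1 := by
  have h := playMS_le σ1 σ2 s Φ hΦ Set.univ
  rw [Set.univ_inter, ← Set.compl_eq_univ_sdiff] at h
  exact h.symm.trans (pr_univ σ1 σ2 s)

/-- Continuity from below along increasing sequences of measurable events. -/
lemma pr_iUnion_le (σ1 : G.Strategy1) (σ2 : G.Strategy2) (s : G.S) (E : ℕ → Set G.Play)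
    (hm : Monotone E) (hE : ∀ n, @MeasurableSet _ (playMS G) (E n)) (c : ℝ≥0∞)
    (h : ∀ n, pr σ1 σ2 s (E n) ≤ c) : pr σ1 σ2 s (⋃ n, E n) ≤ c := by
  let _ := playMS G
  let P : MeasureTheory.Measure G.Play := (prOuter σ1 σ2 s).toMeasure (playMS_le σ1 σ2 s)
  have hP : ∀ A, MeasurableSet A → P A = pr σ1 σ2 s A := fun A hA =>
    MeasureTheory.toMeasure_apply _ _ hA
  rw [← hP _ (MeasurableSet.iUnion hE), hm.measure_iUnion]
  exact iSup_le fun n => by rw [hP _ (hE n)]; exact h n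

/-- Prepend a round to a play. -/
def consP (m : G.Move) (ρ : G.Play) : G.Play
  | 0 => m
  | i + 1 => ρ i

/-- Conditioning on the first round bounds the probability of an event from below. -/
lemma stepW_mul_pr_le (σ1 : G.Strategy1) (σ2 : G.Strategy2) (s : G.S) (Φ : Set G.Play)
    (x : G.A × G.A × G.S) (hΦ : ∀ m, ∀ ρ ∈ Φ, consP m ρ ∈ Φ) :
    stepW σ1 σ2 s x * pr (σ1.shift (s, x.1, x.2.1)) (σ2.shift (s, x.1, x.2.1)) x.2.2 Φ
      ≤ pr σ1 σ2 s Φ := by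
  set m : G.Move := (s, x.1, x.2.1) with hm
  have hne : stepW σ1 σ2 s x ≠ ∞ :=
    ne_top_of_le_ne_top ENNReal.one_ne_top
      ((Finset.single_le_sum (f := stepW σ1 σ2 s) (fun _ _ => zero_le)
        (Finset.mem_univ x)).trans (stepW_sum σ1 σ2 s).le)
  have key : (stepW σ1 σ2 s x) • MeasureTheory.OuterMeasure.map (consP m)
      (prOuter (σ1.shift m) (σ2.shift m) x.2.2) ≤ prOuter σ1 σ2 s := by
    refine MeasureTheory.OuterMeasure.le_ofFunction.2 fun U => ?_
    rw [smul_apply, MeasureTheory.OuterMeasure.map_apply, smul_eq_mul,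
      preMeas_eq]
    refine le_iInf fun n => le_trans ?_ (EX_ind_antitone σ1 σ2 s U (Nat.le_succ n))
    simp only [Nat.succ_eq_add_one]
    rw [EX]
    refine le_trans ?_ (Finset.single_le_sum (fun _ _ => zero_le) (Finset.mem_univ x))
    gcongr
    refine (MeasureTheory.OuterMeasure.ofFunction_le _).trans ?_
    rw [preMeas_eq]
    refine (iInf_le _ n).trans (EX_mono _ _ _ _ _ _ fun w hw => ?_)
    unfold ind
    split_ifs with h1 h2 <;> try simp
    obtain ⟨ρ, hρ, h⟩ := h1
    exact h2 ⟨consP m ρ, hρ, rfl, h⟩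
  refine le_trans ?_ (key Φ)
  rw [smul_apply, MeasureTheory.OuterMeasure.map_apply, smul_eq_mul]
  gcongr
  exact (prOuter _ _ _).mono fun ρ hρ => hΦ m ρ hρ

end CGS

namespace CGS

variable {G : CGS}

/-! ### Fixpoints -/

section Fixpoints

variable {α : Type*}

lemma gfpS_subset {f : Set α → Set α} (hf : Monotone f) : gfpS f ⊆ f (gfpS f) :=
  Set.sUnion_subset fun _ hX => hX.trans (hf (Set.subset_sUnion_of_mem hX))

lemma subset_gfpS {f : Set α → Set α} {X : Set α} (h : X ⊆ f X) : X ⊆ gfpS f :=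
  Set.subset_sUnion_of_mem h

lemma lfpS_subset {f : Set α → Set α} {X : Set α} (h : f X ⊆ X) : lfpS f ⊆ X :=
  Set.sInter_subset_of_mem h

lemma map_lfpS_subset {f : Set α → Set α} (hf : Monotone f) : f (lfpS f) ⊆ lfpS f :=
  Set.subset_sInter fun _ hX => (hf (lfpS_subset hX)).trans hX

lemma lfpS_subset_map {f : Set α → Set α} (hf : Monotone f) : lfpS f ⊆ f (lfpS f) :=
  lfpS_subset (hf (map_lfpS_subset hf))

lemma gfpS_mono {f g : Set α → Set α} (h : ∀ X, f X ⊆ g X) : gfpS f ⊆ gfpS g :=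
  Set.sUnion_subset fun X hX => subset_gfpS (hX.trans (h X))

lemma lfpS_mono {f g : Set α → Set α} (h : ∀ X, f X ⊆ g X) : lfpS f ⊆ lfpS g :=
  Set.subset_sInter fun X hX => lfpS_subset ((h X).trans hX)

lemma iterate_univ_antitone {f : Set α → Set α} (hf : Monotone f) :
    Antitone fun n => f^[n] Set.univ :=
  hf.antitone_iterate_of_map_le (Set.subset_univ _)

lemma exists_iterate_subset_gfpS [Finite α] {f : Set α → Set α} (hf : Monotone f) :
    ∃ M, f^[M] Set.univ ⊆ gfpS f := by
  obtain ⟨M, hM⟩ := WellFoundedLT.antitone_chain_condition (iterate_univ_antitone hf)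
  refine ⟨M, subset_gfpS ?_⟩
  rw [← Function.iterate_succ_apply' f]
  exact (hM (M + 1) (Nat.le_succ M)).le

lemma exists_lfpS_subset_iterate [Finite α] {f : Set α → Set α} (hf : Monotone f) :
    ∃ M, lfpS f ⊆ f^[M] ∅ := by
  obtain ⟨M, hM⟩ := WellFoundedGT.monotone_chain_condition
    (a := ⟨fun n => f^[n] ∅, hf.monotone_iterate_of_le_map (Set.empty_subset _)⟩)
  refine ⟨M, lfpS_subset ?_⟩
  rw [← Function.iterate_succ_apply' f]
  exact (hM (M + 1) (Nat.le_succ M)).ge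

lemma exists_first_drop {Z : ℕ → Set α} (h0 : Z 0 = Set.univ) {s : α} {M : ℕ} (h : s ∉ Z M) :
    ∃ i < M, s ∈ Z i ∧ s ∉ Z (i + 1) := by
  induction M with
  | zero => exact absurd (h0 ▸ Set.mem_univ s) h
  | succ M ih =>
    by_cases hM : s ∈ Z M
    · exact ⟨M, Nat.lt_succ_self M, hM, h⟩
    · obtain ⟨i, hi, h'⟩ := ih hM
      exact ⟨i, hi.trans (Nat.lt_succ_self M), h'⟩

end Fixpoints

lemma ASP_mono {X X' Y Y' Z Z' : Set G.S} (hX : X ⊆ X') (hY : Y ⊆ Y') (hZ : Z ⊆ Z') :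
    G.ASP X Y Z ⊆ G.ASP X' Y' Z' := by
  have hA : ∀ s, G.allow1 s X ⊆ G.allow1 s X' := fun s a ha =>
    ⟨ha.1, fun b hb => (ha.2 b hb).trans hX⟩
  rintro s ⟨a, ha, h⟩
  refine ⟨a, hA s ha, fun b hb hbad => ?_⟩
  have hbad' : b ∉ G.bad2 s X Y := by
    rintro ⟨hb', a', ha', hne⟩
    exact hbad ⟨hb', a', hA s ha', hne.mono (Set.inter_subset_inter_right _ hY)⟩
  exact ⟨(h b hb hbad').1.trans hZ, (h b hb hbad').2⟩

lemma inner_mono (X : Set G.S) : Monotone fun Y => gfpS fun Z => G.ASP X Y Z := fun _ _ h =>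
  gfpS_mono fun _ => ASP_mono subset_rfl h subset_rfl

lemma outer_mono : Monotone fun X => lfpS fun Y => gfpS fun Z => G.ASP X Y Z := fun _ _ h =>
  lfpS_mono fun _ => gfpS_mono fun _ => ASP_mono h subset_rfl subset_rfl

/-- `X*` is exhausted by finitely many levels `Y 1, Y 2, …`, where every state of `Y (i + 1)`
has an action which is good with respect to `X*`, `Y i` and `Y (i + 1)`. -/
lemma exists_levels (G : CGS) : ∃ (N : ℕ) (Y : ℕ → Set G.S), Y 0 = ∅ ∧ G.Xstar ⊆ Y N ∧
    ∀ i, Y (i + 1) ⊆ G.ASP G.Xstar (Y i) (Y (i + 1)) := by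
  obtain ⟨N, hN⟩ := exists_lfpS_subset_iterate (inner_mono G.Xstar)
  refine ⟨N, fun i => (fun Y => gfpS fun Z => G.ASP G.Xstar Y Z)^[i] ∅, rfl,
    (gfpS_subset outer_mono).trans hN, fun i => ?_⟩
  simp only [Function.iterate_succ_apply']
  exact gfpS_subset fun Z Z' h => ASP_mono subset_rfl subset_rfl h

/-- The complement of `X*` is stratified by a sequence `Xs 0 = S, Xs 1, …`. From a state that
has left `Xs (k + 1)`, each action that is allowed with respect to `Xs k` has a non-bad
counter-action that either yields reward zero or may decrease the rank `rk k`. -/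
lemma exists_colevels (G : CGS) : ∃ (M : ℕ) (Xs : ℕ → Set G.S) (rk : ℕ → G.S → ℕ),
    Xs 0 = Set.univ ∧ Antitone Xs ∧ (∀ s, s ∉ G.Xstar → ∃ k, s ∉ Xs k) ∧
    ∀ k s, s ∉ Xs (k + 1) → rk k s < M ∧
      ∀ a ∈ G.allow1 s (Xs k), ∃ b ∈ G.moves2 s, b ∉ G.bad2 s (Xs k) (Xs (k + 1)) ∧
        ((∃ t ∈ (G.trans s a b).support, t ∉ Xs (k + 1) ∧ rk k t < rk k s) ∨
          G.reward s a b = 0) := by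
  obtain ⟨K, hK⟩ := exists_iterate_subset_gfpS (outer_mono (G := G))
  set F : Set G.S → Set G.S := fun X => lfpS fun Y => gfpS fun Z => G.ASP X Y Z with hF
  have hmono : ∀ X Y : Set G.S, Monotone fun Z => G.ASP X Y Z := fun X Y Z Z' h =>
    ASP_mono subset_rfl subset_rfl h
  have hM : ∀ X : Set G.S, ∃ M, (fun Z => G.ASP X (F X) Z)^[M] Set.univ ⊆ F X := fun X => by
    obtain ⟨M, h⟩ := exists_iterate_subset_gfpS (hmono X (F X))
    exact ⟨M, h.trans (map_lfpS_subset (inner_mono X))⟩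
  choose M hM using hM
  have hrk : ∀ X s, ∃ i, s ∉ F X → i < M X ∧ s ∈ (fun Z => G.ASP X (F X) Z)^[i] Set.univ ∧
      s ∉ (fun Z => G.ASP X (F X) Z)^[i + 1] Set.univ := fun X s => by
    by_cases hs : s ∈ F X
    · exact ⟨0, fun h => absurd hs h⟩
    · obtain ⟨i, hi⟩ := exists_first_drop
        (Z := fun i => (fun Z => G.ASP X (F X) Z)^[i] Set.univ) rfl (fun h => hs (hM X h))
      exact ⟨i, fun _ => hi⟩
  choose rk hrk using hrk
  refine ⟨Finset.univ.sup M, fun k => F^[k] Set.univ, fun k => rk (F^[k] Set.univ), rfl,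
    iterate_univ_antitone outer_mono, fun s hs => ⟨K, fun h => hs (hK h)⟩, fun k s hs => ?_⟩
  simp only [Function.iterate_succ_apply'] at hs ⊢
  set X := F^[k] Set.univ
  obtain ⟨h1, h2, h3⟩ := hrk X s hs
  refine ⟨lt_of_lt_of_le h1 (Finset.le_sup (Finset.mem_univ X)), fun a ha => ?_⟩
  rw [Function.iterate_succ_apply'] at h3
  have h4 : ¬ ∀ b ∈ G.moves2 s, b ∉ G.bad2 s X (F X) → (G.trans s a b).support ⊆
      (fun Z => G.ASP X (F X) Z)^[rk X s] Set.univ ∧ G.reward s a b = 1 := fun h =>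
    h3 ⟨a, ha, h⟩
  push Not at h4
  obtain ⟨b, hb, hbad, h5⟩ := h4
  refine ⟨b, hb, hbad, ?_⟩
  rcases G.reward_bool s a b with h0 | h0
  · exact Or.inr h0
  left
  have h6 : ¬ (G.trans s a b).support ⊆ (fun Z => G.ASP X (F X) Z)^[rk X s] Set.univ :=
    fun h => h5 h h0
  obtain ⟨t, ht, ht'⟩ := Set.not_subset.1 h6
  have htF : t ∉ F X := fun h => hbad ⟨hb, a, ha, t, ht, h⟩
  refine ⟨t, ht, htF, ?_⟩
  by_contra hlt
  exact ht' (iterate_univ_antitone (hmono X (F X)) (not_lt.1 hlt) (hrk X t htF).2.1)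

end CGS

namespace CGS

variable {G : CGS}

/-! ### Markov strategies -/

/-- The strategy that plays `π t` at time `t`, where the clock is started at time `t₀`. -/
def markov {mv : G.S → Finset G.A} (π : ℕ → G.S → PMF G.A)
    (hπ : ∀ t s a, π t s a ≠ 0 → a ∈ mv s) (t₀ : ℕ) : G.Strategy mv where
  play h s := π (t₀ + h.length) s
  play_mem _ s a := hπ _ s a

lemma markov_shift {mv : G.S → Finset G.A} (π : ℕ → G.S → PMF G.A)
    (hπ : ∀ t s a, π t s a ≠ 0 → a ∈ mv s) (t₀ : ℕ) (m : G.Move) :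
    (markov π hπ t₀).shift m = markov π hπ (t₀ + 1) := by
  unfold Strategy.shift markov
  congr 1
  funext h s
  simp only [List.length_cons]
  congr 1
  omega

/-- The convex combination `(1 - e) p + e q`. -/
noncomputable def mix {α : Type*} [Fintype α] (e : ℝ≥0∞) (he : e ≤ 1) (p q : PMF α) : PMF α :=
  PMF.ofFintype (fun a => (1 - e) * p a + e * q a) (by
    rw [Finset.sum_add_distrib, ← Finset.mul_sum, ← Finset.mul_sum, sum_pmf, sum_pmf, mul_one,
      mul_one, tsub_add_cancel_of_le he])

lemma mix_apply {α : Type*} [Fintype α] (e : ℝ≥0∞) (he : e ≤ 1) (p q : PMF α) (a : α) :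
    mix e he p q a = (1 - e) * p a + e * q a := rfl

/-- A uniform lower bound on the positive transition probabilities. -/
lemma exists_trans_lb (G : CGS) : ∃ d : ℝ, 0 < d ∧ d ≤ 1 ∧
    ∀ s a b t, G.trans s a b t ≠ 0 → ENNReal.ofReal d ≤ G.trans s a b t := by
  let T : Finset (G.S × G.A × G.A × G.S) :=
    Finset.univ.filter fun x => G.trans x.1 x.2.1 x.2.2.1 x.2.2.2 ≠ 0
  obtain ⟨s₀⟩ := G.nonemptyS
  obtain ⟨a₀, _⟩ := G.moves1_nonempty s₀
  obtain ⟨t₀, ht₀⟩ := (G.trans s₀ a₀ a₀).support_nonempty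
  have hT : T.Nonempty := ⟨(s₀, a₀, a₀, t₀), by
    simpa [T] using ht₀⟩
  obtain ⟨x, hx, hmin⟩ := T.exists_min_image (fun x => G.trans x.1 x.2.1 x.2.2.1 x.2.2.2) hT
  have hx0 : G.trans x.1 x.2.1 x.2.2.1 x.2.2.2 ≠ 0 := (Finset.mem_filter.1 hx).2
  have hx1 : G.trans x.1 x.2.1 x.2.2.1 x.2.2.2 ≤ 1 := PMF.coe_le_one _ _
  have hxt := ne_top_of_le_ne_top ENNReal.one_ne_top hx1
  refine ⟨(G.trans x.1 x.2.1 x.2.2.1 x.2.2.2).toReal, ENNReal.toReal_pos hx0 hxt, ?_, ?_⟩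
  · exact ENNReal.toReal_le_of_le_ofReal zero_le_one (by simpa using hx1)
  · intro s a b t h
    rw [ENNReal.ofReal_toReal hxt]
    exact hmin (s, a, b, t) (by simp [T, h])

lemma uniform_ge {α : Type*} [Fintype α] (F : Finset α) (hF : F.Nonempty) (a : α) (ha : a ∈ F) :
    (Fintype.card α : ℝ≥0∞)⁻¹ ≤ PMF.uniformOfFinset F hF a := by
  rw [PMF.uniformOfFinset_apply_of_mem hF ha]
  apply ENNReal.inv_le_inv.2
  exact_mod_cast Finset.card_le_univ F

/-! ### Player 2 wins with positive probability outside `X*` -/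

/-- Total loss `∑ (1 - r)` accumulated over the first `n` rounds. -/
noncomputable def loss (ρ : G.Play) (n : ℕ) : ℝ :=
  ∑ i ∈ Finset.range n, (1 - G.reward (ρ i).1 (ρ i).2.1 (ρ i).2.2)

lemma loss_nonneg (ρ : G.Play) (n : ℕ) : 0 ≤ loss ρ n :=
  Finset.sum_nonneg fun i _ => by
    rcases G.reward_bool (ρ i).1 (ρ i).2.1 (ρ i).2.2 with h | h <;> rw [h] <;> norm_num

/-- The plays whose loss grows at least linearly, with rate `c`. -/
def evLoss (G : CGS) (c : ℝ) : Set G.Play := {ρ | ∃ C : ℝ, ∀ n : ℕ, c * n - C ≤ loss ρ n}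

lemma consP_mem_evLoss {c : ℝ} (m : G.Move) (ρ : G.Play) (h : ρ ∈ evLoss G c) :
    consP m ρ ∈ evLoss G c := by
  obtain ⟨C, hC⟩ := h
  refine ⟨max 0 (C + c), fun n => ?_⟩
  cases n with
  | zero => simp [loss]
  | succ n =>
    have h1 : loss (consP m ρ) (n + 1) = loss ρ n + (1 - G.reward m.1 m.2.1 m.2.2) := by
      rw [loss, Finset.sum_range_succ']; rfl
    have h2 : 0 ≤ 1 - G.reward m.1 m.2.1 m.2.2 := by
      rcases G.reward_bool m.1 m.2.1 m.2.2 with h | h <;> rw [h] <;> norm_num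
    rw [h1]
    have := hC n
    have := le_max_right 0 (C + c)
    push_cast
    linarith

lemma sum_mul_ofReal_le {ι : Type*} [Fintype ι] (p : ι → ℝ≥0∞) (hp : ∑ i, p i = 1) (y : ι → ℝ)
    (hy : ∀ i, p i ≠ 0 → y i ≤ 1) (i₀ : ι) {κ ν : ℝ} (hκ : 0 ≤ κ) (hν : 0 ≤ ν) (hν1 : ν ≤ 1)
    (hpi : ENNReal.ofReal κ ≤ p i₀) (hyi : y i₀ ≤ 1 - ν) :
    ∑ i, p i * ENNReal.ofReal (y i) ≤ ENNReal.ofReal (1 - κ * ν) := by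
  rw [ENNReal.ofReal_sub _ (mul_nonneg hκ hν), ENNReal.ofReal_one]
  apply ENNReal.le_sub_of_add_le_right ENNReal.ofReal_ne_top
  calc ∑ i, p i * ENNReal.ofReal (y i) + ENNReal.ofReal (κ * ν)
      ≤ ∑ i, p i * ENNReal.ofReal (y i) + p i₀ * ENNReal.ofReal ν := by
        rw [ENNReal.ofReal_mul hκ]; gcongr
    _ = ∑ i, (p i * ENNReal.ofReal (y i) + if i = i₀ then p i * ENNReal.ofReal ν else 0) := by
        rw [Finset.sum_add_distrib]; simp
    _ ≤ ∑ i, p i := by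
        refine Finset.sum_le_sum fun i _ => ?_
        split_ifs with h
        · subst h
          rw [← mul_add]
          refine mul_le_of_le_one_right' ?_
          calc ENNReal.ofReal (y i) + ENNReal.ofReal ν
              ≤ ENNReal.ofReal (1 - ν) + ENNReal.ofReal ν := by gcongr
            _ = 1 := by rw [← ENNReal.ofReal_add (by linarith) hν]; simp
        · rw [add_zero]
          by_cases h0 : p i = 0
          · simp [h0]
          · exact mul_le_of_le_one_right' (by
              simpa using ENNReal.ofReal_le_ofReal (hy i h0))
    _ = 1 := hp

/-- The strategy data of player 2. On the stratum `Xs k ∖ Xs (k + 1)` the action is drawn, up to a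
perturbation of size `2⁻¹ ^ (t + 2)` at time `t`, uniformly from the non-bad actions; the
perturbation gives every available action positive probability. -/
lemma exists_spoiler (G : CGS) (Xs : ℕ → Set G.S) (hanti : Antitone Xs)
    (hne : ∀ k s, s ∉ Xs (k + 1) → ∃ b ∈ G.moves2 s, b ∉ G.bad2 s (Xs k) (Xs (k + 1))) :
    ∃ π : ℕ → G.S → PMF G.A, (∀ t s b, π t s b ≠ 0 → b ∈ G.moves2 s) ∧
      (∀ t s, ∀ b ∈ G.moves2 s, π t s b ≠ 0) ∧
      ∀ k s, s ∈ Xs k → s ∉ Xs (k + 1) → ∀ t,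
        (∑ b, (if b ∈ G.bad2 s (Xs k) (Xs (k + 1)) then π t s b else 0) ≤ 2⁻¹ ^ (t + 2)) ∧
        ∀ b ∈ G.moves2 s, b ∉ G.bad2 s (Xs k) (Xs (k + 1)) →
          2⁻¹ * (Fintype.card G.A : ℝ≥0∞)⁻¹ ≤ π t s b := by
  have hk : ∀ s, ∃ k, ∀ j, s ∈ Xs j → s ∉ Xs (j + 1) → k = j := by
    intro s
    by_cases h : ∃ j, s ∈ Xs j ∧ s ∉ Xs (j + 1)
    · obtain ⟨j, hj1, hj2⟩ := h
      refine ⟨j, fun i hi1 hi2 => ?_⟩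
      by_contra hij
      rcases Nat.lt_or_gt_of_ne hij with h | h
      · exact hj2 (hanti h hi1)
      · exact hi2 (hanti h hj1)
    · exact ⟨0, fun j h1 h2 => absurd ⟨j, h1, h2⟩ h⟩
  choose kf hkf using hk
  let NB : G.S → Finset G.A := fun s =>
    (G.moves2 s).filter fun b => b ∉ G.bad2 s (Xs (kf s)) (Xs (kf s + 1))
  let F : G.S → Finset G.A := fun s => if (NB s).Nonempty then NB s else G.moves2 s
  have hF : ∀ s, (F s).Nonempty := fun s => by
    by_cases h : (NB s).Nonempty
    · simp only [F, if_pos h]; exact h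
    · simp only [F, if_neg h]; exact G.moves2_nonempty s
  have hFm : ∀ s, F s ⊆ G.moves2 s := fun s => by
    by_cases h : (NB s).Nonempty
    · simp only [F, if_pos h]; exact Finset.filter_subset _ _
    · simp only [F, if_neg h]; exact subset_rfl
  have he : ∀ t : ℕ, (2⁻¹ : ℝ≥0∞) ^ (t + 2) ≤ 1 := fun t =>
    pow_le_one₀ zero_le (ENNReal.inv_le_one.2 one_le_two)
  refine ⟨fun t s => mix (2⁻¹ ^ (t + 2)) (he t) (PMF.uniformOfFinset (F s) (hF s))
    (PMF.uniformOfFinset (G.moves2 s) (G.moves2_nonempty s)), ?_, ?_, ?_⟩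
  · intro t s b hb
    by_contra hmem
    apply hb
    rw [mix_apply, PMF.uniformOfFinset_apply_of_notMem _ hmem,
      PMF.uniformOfFinset_apply_of_notMem _ (fun h => hmem (hFm s h))]
    simp
  · intro t s b hb
    rw [mix_apply]
    have : (2⁻¹ : ℝ≥0∞) ^ (t + 2) * PMF.uniformOfFinset (G.moves2 s) (G.moves2_nonempty s) b ≠ 0 :=
      mul_ne_zero (pow_ne_zero _ (by simp)) (by
        rw [← PMF.mem_support_iff, PMF.mem_support_uniformOfFinset_iff]; exact hb)
    simpa using fun _ => this
  · intro k s hs1 hs2 t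
    have hks : kf s = k := hkf s k hs1 hs2
    have hNB : ∀ b, b ∈ NB s ↔ b ∈ G.moves2 s ∧ b ∉ G.bad2 s (Xs k) (Xs (k + 1)) := fun b => by
      simp [NB, hks]
    have hFN : F s = NB s := by
      obtain ⟨b, hb⟩ := hne k s hs2
      exact if_pos ⟨b, (hNB b).2 hb⟩
    constructor
    · calc ∑ b, (if b ∈ G.bad2 s (Xs k) (Xs (k + 1)) then
              mix (2⁻¹ ^ (t + 2)) (he t) (PMF.uniformOfFinset (F s) (hF s))
                (PMF.uniformOfFinset (G.moves2 s) (G.moves2_nonempty s)) b else 0)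
          ≤ ∑ b, 2⁻¹ ^ (t + 2) *
              PMF.uniformOfFinset (G.moves2 s) (G.moves2_nonempty s) b := by
            refine Finset.sum_le_sum fun b _ => ?_
            split_ifs with h
            · rw [mix_apply, PMF.uniformOfFinset_apply_of_notMem (hF s)
                (by rw [hFN, hNB]; exact fun h' => h'.2 h)]
              simp
            · exact zero_le
        _ = 2⁻¹ ^ (t + 2) := by rw [← Finset.mul_sum, sum_pmf, mul_one]
    · intro b hb hbad
      rw [mix_apply]
      refine le_trans ?_ le_self_add
      refine mul_le_mul' ?_ (uniform_ge _ _ _ (by rw [hFN, hNB]; exact ⟨hb, hbad⟩))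
      apply ENNReal.le_sub_of_add_le_right (ne_top_of_le_ne_top ENNReal.one_ne_top (he t))
      calc (2⁻¹ : ℝ≥0∞) + 2⁻¹ ^ (t + 2) ≤ 2⁻¹ + 2⁻¹ := by
            gcongr
            exact pow_le_of_le_one zero_le (ENNReal.inv_le_one.2 one_le_two) (by omega)
        _ = 1 := ENNReal.inv_two_add_inv_two

end CGS

namespace CGS

variable {G : CGS}

/-- The exponential of minus the loss of a word, or zero if the word leaves `W`. -/
noncomputable def gB (W : Set G.S) : List G.Move → ℝ≥0∞
  | [] => 1
  | m :: w => (if m.1 ∈ W then ENNReal.ofReal (Real.exp (-(1 - G.reward m.1 m.2.1 m.2.2))) else 0) *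
      gB W w

lemma gB_eq (W : Set G.S) (w : List G.Move) : ∀ ρ : G.Play, Pfx w ρ →
    (∀ i < w.length, (ρ i).1 ∈ W) →
    gB W w = ENNReal.ofReal (Real.exp (-loss ρ w.length)) := by
  induction w with
  | nil => intro ρ _ _; simp [gB, loss]
  | cons m w ih =>
    intro ρ h hW
    have h0 : (ρ 0).1 ∈ W := hW 0 (by simp)
    rw [gB, ih _ h.2 (fun i hi => hW (i + 1) (by simpa using hi)), ← h.1, if_pos h0,
      ← ENNReal.ofReal_mul (Real.exp_pos _).le, ← Real.exp_add, List.length_cons,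
      loss, loss, Finset.sum_range_succ']
    congr 2
    ring

lemma EX_zero (n : ℕ) (σ1 : G.Strategy1) (σ2 : G.Strategy2) (s : G.S) :
    EX n σ1 σ2 s (fun _ => 0) = 0 := EX_const n σ1 σ2 s 0

/-- The standing data on one stratum `X ∖ Y`: the strategy `π` of player 2, the rank `rk`, and an
invariant `I` of the pairs (continuation strategy of player 1, time, state) reached with positive
probability, under which player 1 only uses actions allowed with respect to `X`. -/
structure Stratum (G : CGS) where
  X : Set G.S
  Y : Set G.S
  rk : G.S → ℕ
  M : ℕ
  π : ℕ → G.S → PMF G.A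
  hπ : ∀ t s b, π t s b ≠ 0 → b ∈ G.moves2 s
  I : G.Strategy1 → ℕ → G.S → Prop
  d : ℝ
  d_pos : 0 < d
  d_le : d ≤ 1
  trans_ge : ∀ s a b t, G.trans s a b t ≠ 0 → ENNReal.ofReal d ≤ G.trans s a b t
  rk_lt : ∀ s, s ∉ Y → rk s < M
  counter : ∀ s, s ∉ Y → ∀ a ∈ G.allow1 s X, ∃ b ∈ G.moves2 s, b ∉ G.bad2 s X Y ∧
    ((∃ t ∈ (G.trans s a b).support, t ∉ Y ∧ rk t < rk s) ∨ G.reward s a b = 0)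
  bad_le : ∀ s, s ∈ X → s ∉ Y → ∀ t,
    ∑ b, (if b ∈ G.bad2 s X Y then π t s b else 0) ≤ 2⁻¹ ^ (t + 2)
  nonbad_ge : ∀ s, s ∈ X → s ∉ Y → ∀ t, ∀ b ∈ G.moves2 s, b ∉ G.bad2 s X Y →
    2⁻¹ * (Fintype.card G.A : ℝ≥0∞)⁻¹ ≤ π t s b
  I_step : ∀ σ1 t s x, s ∈ X → s ∉ Y → I σ1 t s → stepW σ1 (markov π hπ t) s x ≠ 0 →
    I (σ1.shift (s, x.1, x.2.1)) (t + 1) x.2.2 ∧ x.2.2 ∈ X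
  I_allow : ∀ σ1 t s a, s ∈ X → s ∉ Y → I σ1 t s → σ1.play [] s a ≠ 0 → a ∈ G.allow1 s X

/-- Lower bound for the probability of a specific non-bad action followed by a specific
successor. -/
noncomputable def kap (G : CGS) (d : ℝ) : ℝ := 2⁻¹ * (Fintype.card G.A : ℝ)⁻¹ * d

/-- The deficit of the potential `1 - mu` at rank `i`. -/
noncomputable def mu (κ : ℝ) (i : ℕ) : ℝ := κ / 4 * (κ / 2) ^ i

/-- The guaranteed rate of loss. -/
noncomputable def rate (G : CGS) (d : ℝ) (M : ℕ) : ℝ := mu (kap G d) M / 2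

lemma card_pos' (G : CGS) : 0 < (Fintype.card G.A : ℝ) := by
  obtain ⟨s₀⟩ := G.nonemptyS
  obtain ⟨a₀, _⟩ := G.moves1_nonempty s₀
  have : Nonempty G.A := ⟨a₀⟩
  exact_mod_cast Fintype.card_pos

lemma kap_pos (G : CGS) {d : ℝ} (hd : 0 < d) : 0 < kap G d := by
  have := card_pos' G
  unfold kap; positivity

lemma kap_le (G : CGS) {d : ℝ} (hd : 0 < d) (hd1 : d ≤ 1) : kap G d ≤ 1 := by
  obtain ⟨s₀⟩ := G.nonemptyS
  obtain ⟨a₀, _⟩ := G.moves1_nonempty s₀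
  have : Nonempty G.A := ⟨a₀⟩
  have h1 : (1 : ℝ) ≤ Fintype.card G.A := by exact_mod_cast Fintype.card_pos
  have h2 := inv_le_one_of_one_le₀ h1
  have h3 : 0 ≤ (Fintype.card G.A : ℝ)⁻¹ := by positivity
  unfold kap
  nlinarith [mul_le_one₀ h2 hd.le hd1]

lemma ofReal_kap (G : CGS) {d : ℝ} :
    ENNReal.ofReal (kap G d) = 2⁻¹ * (Fintype.card G.A : ℝ≥0∞)⁻¹ * ENNReal.ofReal d := by
  have := card_pos' G
  unfold kap
  rw [ENNReal.ofReal_mul (by positivity), ENNReal.ofReal_mul (by positivity),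
    ENNReal.ofReal_inv_of_pos this, ENNReal.ofReal_inv_of_pos (by norm_num)]
  simp

lemma mu_pos {κ : ℝ} (h : 0 < κ) (i : ℕ) : 0 < mu κ i := by unfold mu; positivity

lemma mu_anti {κ : ℝ} (h : 0 < κ) (h1 : κ ≤ 1) {i j : ℕ} (hij : i ≤ j) : mu κ j ≤ mu κ i := by
  unfold mu
  gcongr ?_ * ?_
  exact pow_le_pow_of_le_one (by positivity) (by linarith) hij

lemma mu_le {κ : ℝ} (h : 0 < κ) (h1 : κ ≤ 1) (i : ℕ) : mu κ i ≤ κ / 4 := by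
  have := mu_anti h h1 (Nat.zero_le i)
  simpa [mu] using this

lemma mu_lt {κ : ℝ} (h : 0 < κ) (h1 : κ ≤ 1) {i j : ℕ} (hij : i < j) :
    2 * mu κ j ≤ κ * mu κ i := by
  have := mu_anti h h1 (Nat.succ_le_of_lt hij)
  have h2 : mu κ (i + 1) = κ / 2 * mu κ i := by unfold mu; ring
  rw [Nat.succ_eq_add_one, h2] at this
  linarith

namespace Stratum

variable (Q : Stratum G)

/-- The region `X ∖ Y`. -/
def W : Set G.S := {s | s ∈ Q.X ∧ s ∉ Q.Y}

/-- The strategy of player 2 with clock started at time `t`. -/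
abbrev strat (t : ℕ) : G.Strategy2 := markov Q.π Q.hπ t

/-- The potential bounding the exponential moment of the loss. -/
noncomputable def psi (s : G.S) : ℝ := if s ∈ Q.Y then 1 / 2 else 1 - mu (kap G Q.d) (Q.rk s)

/-- Starting at time `t`, the region is left only through the perturbation, whose total mass
is at most `2⁻¹ ^ (t + 1)`. -/
lemma leave_bound (n : ℕ) : ∀ (σ1 : G.Strategy1) (t : ℕ) (s : G.S), Q.I σ1 t s → s ∈ Q.X →
    s ∉ Q.Y →
    EX n σ1 (Q.strat t) s (fun w => if ∃ m ∈ w, m.1 ∉ Q.W then 1 else 0) ≤ 2⁻¹ ^ (t + 1) := by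
  induction n with
  | zero => intro σ1 t s _ _ _; simp [EX]
  | succ n ih =>
    intro σ1 t s hI hX hY
    rw [EX]
    calc ∑ x : G.A × G.A × G.S, stepW σ1 (Q.strat t) s x *
          EX n (σ1.shift (s, x.1, x.2.1)) ((Q.strat t).shift (s, x.1, x.2.1)) x.2.2
            (fun w => if ∃ m ∈ (s, x.1, x.2.1) :: w, m.1 ∉ Q.W then 1 else 0)
        ≤ ∑ x : G.A × G.A × G.S, (stepW σ1 (Q.strat t) s x * 2⁻¹ ^ (t + 2) +
            stepW σ1 (Q.strat t) s x * (if x.2.1 ∈ G.bad2 s Q.X Q.Y then 1 else 0)) := by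
          refine Finset.sum_le_sum fun x _ => ?_
          by_cases h0 : stepW σ1 (Q.strat t) s x = 0
          · rw [h0]; simp
          obtain ⟨hI', hX'⟩ := Q.I_step σ1 t s x hX hY hI h0
          rw [← mul_add]
          gcongr
          by_cases hY' : x.2.2 ∈ Q.Y
          · have hbad : x.2.1 ∈ G.bad2 s Q.X Q.Y := by
              unfold stepW at h0
              have h1 := left_ne_zero_of_mul h0
              refine ⟨Q.hπ _ s _ (right_ne_zero_of_mul h1), x.1,
                Q.I_allow σ1 t s _ hX hY hI (left_ne_zero_of_mul h1), x.2.2, ?_, hY'⟩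
              exact right_ne_zero_of_mul h0
            rw [if_pos hbad]
            refine le_trans ?_ le_add_self
            refine (EX_mono n _ _ _ _ (fun _ => 1) fun w _ => ?_).trans (EX_const _ _ _ _ _).le
            split_ifs <;> simp
          · refine le_trans ?_ le_self_add
            rw [markov_shift]
            refine le_trans (EX_mono n _ _ _ _ _ fun w _ => ?_) (ih _ _ _ hI' hX' hY')
            have hs : s ∈ Q.W := ⟨hX, hY⟩
            simp [hs]
      _ = 2⁻¹ ^ (t + 2) + ∑ b, (if b ∈ G.bad2 s Q.X Q.Y then Q.π t s b else 0) := by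
          rw [Finset.sum_add_distrib, ← Finset.sum_mul, stepW_sum, one_mul]
          congr 1
          simp only [stepW, Fintype.sum_prod_type]
          have : ∀ a b, ∑ t', σ1.play [] s a * (Q.strat t).play [] s b * G.trans s a b t' *
              (if b ∈ G.bad2 s Q.X Q.Y then (1 : ℝ≥0∞) else 0) =
              σ1.play [] s a * (if b ∈ G.bad2 s Q.X Q.Y then Q.π t s b else 0) := by
            intro a b
            rw [← Finset.sum_mul, ← Finset.mul_sum, sum_pmf, mul_one]
            split_ifs <;> simp [markov]
          simp only [this, ← Finset.mul_sum, ← Finset.sum_mul, sum_pmf, one_mul]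
      _ ≤ 2⁻¹ ^ (t + 2) + 2⁻¹ ^ (t + 2) := by
          gcongr; exact Q.bad_le s hX hY t
      _ = 2⁻¹ ^ (t + 1) := by
          rw [pow_succ _ (t + 1), ← mul_add, ENNReal.inv_two_add_inv_two, mul_one]

/-- Against an allowed action, one round multiplies the potential by at most `1 - 2 mu`. -/
lemma psi_step (t : ℕ) (s : G.S) (hX : s ∈ Q.X) (hY : s ∉ Q.Y) (a : G.A)
    (ha : a ∈ G.allow1 s Q.X) :
    ∑ y : G.A × G.S, (Q.π t s y.1 * G.trans s a y.1 y.2) *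
      ENNReal.ofReal (Real.exp (-(1 - G.reward s a y.1)) * Q.psi y.2) ≤
      ENNReal.ofReal (1 - 2 * mu (kap G Q.d) (Q.rk s)) := by
  have hκ := kap_pos G Q.d_pos
  have hκ1 := kap_le G Q.d_pos Q.d_le
  set κ := kap G Q.d with hκdef
  have hp : ∑ y : G.A × G.S, Q.π t s y.1 * G.trans s a y.1 y.2 = 1 := by
    simp only [Fintype.sum_prod_type, ← Finset.mul_sum, sum_pmf, mul_one]
  have hexp : ∀ b, Real.exp (-(1 - G.reward s a b)) ≤ 1 := fun b => by
    rw [Real.exp_le_one_iff]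
    rcases G.reward_bool s a b with h | h <;> rw [h] <;> norm_num
  have hpsi0 : ∀ t, 0 ≤ Q.psi t := fun t => by
    unfold psi
    split_ifs
    · norm_num
    · linarith [mu_le hκ hκ1 (Q.rk t)]
  have hpsi1 : ∀ t, Q.psi t ≤ 1 := fun t => by
    unfold psi
    split_ifs
    · norm_num
    · linarith [mu_pos hκ (Q.rk t)]
  have hy : ∀ y : G.A × G.S, Real.exp (-(1 - G.reward s a y.1)) * Q.psi y.2 ≤ 1 := fun y =>
    mul_le_one₀ (hexp _) (hpsi0 _) (hpsi1 _)
  have hat : ∀ b ∈ G.moves2 s, b ∉ G.bad2 s Q.X Q.Y → ∀ t' ∈ (G.trans s a b).support,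
      ENNReal.ofReal κ ≤ Q.π t s b * G.trans s a b t' := fun b hb hbad t' ht' => by
    rw [hκdef, ofReal_kap]
    exact mul_le_mul' (Q.nonbad_ge s hX hY t b hb hbad) (Q.trans_ge _ _ _ _ ht')
  obtain ⟨b, hb, hbad, ⟨t', ht', htY, hrk⟩ | h0⟩ := Q.counter s hY a ha
  · refine (sum_mul_ofReal_le (κ := κ) (ν := mu κ (Q.rk t')) _ hp _ (fun y _ => hy y) (b, t') hκ.le
      (mu_pos hκ _).le (by linarith [mu_le hκ hκ1 (Q.rk t')]) (hat b hb hbad t' ht') ?_).trans ?_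
    · have : Q.psi t' = 1 - mu κ (Q.rk t') := by rw [psi, if_neg htY]
      simp only
      rw [this]
      exact mul_le_of_le_one_left (this ▸ hpsi0 t') (hexp b)
    · apply ENNReal.ofReal_le_ofReal
      linarith [mu_lt hκ hκ1 hrk]
  · obtain ⟨t', ht'⟩ := (G.trans s a b).support_nonempty
    refine (sum_mul_ofReal_le (κ := κ) (ν := 1 / 2) _ hp _ (fun y _ => hy y) (b, t') hκ.le
      (by norm_num) (by norm_num) (hat b hb hbad t' ht') ?_).trans ?_
    · simp only
      rw [h0]
      have h1 : Real.exp (-(1 - 0)) ≤ 1 / 2 := by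
        rw [Real.exp_neg, inv_le_comm₀ (Real.exp_pos _) (by norm_num)]
        have := Real.add_one_le_exp (1 - 0 : ℝ)
        norm_num at this ⊢
        linarith
      calc Real.exp (-(1 - 0)) * Q.psi t' ≤ 1 / 2 * 1 :=
            mul_le_mul h1 (hpsi1 t') (hpsi0 t') (by norm_num)
        _ ≤ 1 - 1 / 2 := by norm_num
    · apply ENNReal.ofReal_le_ofReal
      linarith [mu_le hκ hκ1 (Q.rk s)]

/-- As long as the play stays in the region, the exponential moment of minus the loss decays
geometrically. -/
lemma loss_bound (n : ℕ) : ∀ (σ1 : G.Strategy1) (t : ℕ) (s : G.S), Q.I σ1 t s → s ∈ Q.X →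
    EX n σ1 (Q.strat t) s (gB Q.W) ≤
      ENNReal.ofReal (2 * Q.psi s * (1 - mu (kap G Q.d) Q.M) ^ n) := by
  have hκ := kap_pos G Q.d_pos
  have hκ1 := kap_le G Q.d_pos Q.d_le
  set κ := kap G Q.d with hκdef
  have hM := mu_le hκ hκ1 Q.M
  have hM0 := mu_pos hκ Q.M
  have hpsih : ∀ s, 1 / 2 ≤ Q.psi s := fun s => by
    unfold psi
    split_ifs
    · norm_num
    · linarith [mu_le hκ hκ1 (Q.rk s)]
  induction n with
  | zero =>
    intro σ1 t s _ _
    rw [EX, gB, ← ENNReal.ofReal_one]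
    apply ENNReal.ofReal_le_ofReal
    linarith [hpsih s, pow_zero (1 - mu κ Q.M)]
  | succ n ih =>
    intro σ1 t s hI hX
    rw [EX]
    by_cases hY : s ∈ Q.Y
    · have hs : s ∉ Q.W := fun h => h.2 hY
      simp only [gB, hs, if_false, zero_mul, EX_zero, mul_zero, Finset.sum_const_zero]
      exact zero_le
    have hs : s ∈ Q.W := ⟨hX, hY⟩
    simp only [gB, hs, if_true, EX_mul]
    set γ := 1 - mu κ Q.M with hγ
    have hγ0 : 0 ≤ γ := by linarith
    have hγn : 0 ≤ γ ^ n := pow_nonneg hγ0 n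
    calc ∑ x : G.A × G.A × G.S, stepW σ1 (Q.strat t) s x *
          (ENNReal.ofReal (Real.exp (-(1 - G.reward s x.1 x.2.1))) *
            EX n (σ1.shift (s, x.1, x.2.1)) ((Q.strat t).shift (s, x.1, x.2.1)) x.2.2 (gB Q.W))
        ≤ ∑ x : G.A × G.A × G.S, ENNReal.ofReal (2 * γ ^ n) * (σ1.play [] s x.1 *
            ((Q.π t s x.2.1 * G.trans s x.1 x.2.1 x.2.2) *
            ENNReal.ofReal (Real.exp (-(1 - G.reward s x.1 x.2.1)) * Q.psi x.2.2))) := by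
          refine Finset.sum_le_sum fun x _ => ?_
          by_cases h0 : stepW σ1 (Q.strat t) s x = 0
          · rw [h0]; simp
          obtain ⟨hI', hX'⟩ := Q.I_step σ1 t s x hX hY hI h0
          rw [markov_shift]
          have h2 := ih _ _ _ hI' hX'
          have h3 : stepW σ1 (Q.strat t) s x =
              σ1.play [] s x.1 * Q.π t s x.2.1 * G.trans s x.1 x.2.1 x.2.2 := rfl
          rw [h3, ENNReal.ofReal_mul (Real.exp_pos _).le]
          refine (mul_le_mul_right (mul_le_mul_right h2 _) _).trans (le_of_eq ?_)
          have : 2 * Q.psi x.2.2 * γ ^ n = (2 * γ ^ n) * Q.psi x.2.2 := by ring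
          rw [this, ENNReal.ofReal_mul (p := 2 * γ ^ n) (by positivity)]
          ring
      _ = ENNReal.ofReal (2 * γ ^ n) * ∑ a, σ1.play [] s a * ∑ y : G.A × G.S,
            (Q.π t s y.1 * G.trans s a y.1 y.2) *
            ENNReal.ofReal (Real.exp (-(1 - G.reward s a y.1)) * Q.psi y.2) := by
          rw [← Finset.mul_sum, Fintype.sum_prod_type]
          simp only [Finset.mul_sum]
      _ ≤ ENNReal.ofReal (2 * γ ^ n) * ∑ a, σ1.play [] s a *
            ENNReal.ofReal (1 - 2 * mu κ (Q.rk s)) := by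
          refine mul_le_mul_right (Finset.sum_le_sum fun a _ => ?_) _
          by_cases h0 : σ1.play [] s a = 0
          · rw [h0]; simp
          · exact mul_le_mul_right (Q.psi_step t s hX hY a (Q.I_allow σ1 t s a hX hY hI h0)) _
      _ = ENNReal.ofReal (2 * γ ^ n * (1 - 2 * mu κ (Q.rk s))) := by
          rw [← Finset.sum_mul, sum_pmf, one_mul, ← ENNReal.ofReal_mul (by positivity)]
      _ ≤ _ := by
          apply ENNReal.ofReal_le_ofReal
          have h1 : Q.psi s = 1 - mu κ (Q.rk s) := by rw [psi, if_neg hY]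
          have h2 : mu κ Q.M ≤ mu κ (Q.rk s) := mu_anti hκ hκ1 (Q.rk_lt s hY).le
          have h3 : 1 - 2 * mu κ (Q.rk s) ≤ (1 - mu κ (Q.rk s)) * γ := by
            nlinarith [mul_pos (mu_pos hκ (Q.rk s)) hM0]
          rw [h1, pow_succ]
          calc 2 * γ ^ n * (1 - 2 * mu κ (Q.rk s)) ≤ 2 * γ ^ n * ((1 - mu κ (Q.rk s)) * γ) := by
                gcongr
            _ = _ := by ring

lemma psi_le_one (s : G.S) : Q.psi s ≤ 1 := by
  unfold psi
  split_ifs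
  · norm_num
  · linarith [mu_pos (kap_pos G Q.d_pos) (Q.rk s)]

/-- With probability at least one half, the loss grows linearly. -/
lemma pr_compl_le (σ1 : G.Strategy1) (t : ℕ) (s : G.S) (hI : Q.I σ1 t s) (hX : s ∈ Q.X)
    (hY : s ∉ Q.Y) : pr σ1 (Q.strat t) s (evLoss G (rate G Q.d Q.M))ᶜ ≤ 2⁻¹ := by
  have hκ := kap_pos G Q.d_pos
  set c := rate G Q.d Q.M with hc
  have hc0 : 0 < c := half_pos (mu_pos hκ _)
  have hMc : mu (kap G Q.d) Q.M = 2 * c := by rw [hc, rate]; ring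
  let E : ℕ → Set G.Play := fun n => {ρ | ∃ i < n, (ρ i).1 ∉ Q.W}
  let B : ℕ → Set G.Play := fun n => {ρ | (∀ i < n, (ρ i).1 ∈ Q.W) ∧ loss ρ n ≤ c * n}
  have hsub : (evLoss G c)ᶜ ⊆ (⋃ n, E n) ∪ limsup B atTop := by
    intro ρ hρ
    by_contra hn
    rw [Set.mem_union, not_or, mem_limsup_iff_frequently_mem, not_frequently] at hn
    obtain ⟨h1, h2⟩ := hn
    have hW : ∀ i, (ρ i).1 ∈ Q.W := fun i => by
      by_contra h
      exact h1 (Set.mem_iUnion.2 ⟨i + 1, i, Nat.lt_succ_self i, h⟩)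
    obtain ⟨N, hN⟩ := eventually_atTop.1 h2
    refine hρ ⟨c * N, fun n => ?_⟩
    rcases le_total N n with h | h
    · have : ¬ loss ρ n ≤ c * n := fun h' => hN n h ⟨fun i _ => hW i, h'⟩
      have : 0 ≤ c * N := by positivity
      linarith
    · have h3 : c * n ≤ c * N := by gcongr
      linarith [loss_nonneg ρ n]
  have hE : pr σ1 (Q.strat t) s (⋃ n, E n) ≤ 2⁻¹ := by
    refine pr_iUnion_le _ _ _ E ?_ ?_ _ fun n => ?_
    · rintro n m hnm ρ ⟨i, hi, h⟩
      exact ⟨i, hi.trans_le hnm, h⟩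
    · intro n
      have : E n = ⋃ i ∈ Finset.range n, (fun ρ : G.Play => ρ i) ⁻¹' {m | m.1 ∉ Q.W} := by
        ext ρ; simp [E]
      rw [this]
      refine Finset.measurableSet_biUnion _ fun i _ => ?_
      exact @measurable_pi_apply ℕ (fun _ => G.Move) (fun _ => ⊤) i _ trivial
    · refine (pr_le_EX _ _ _ _ n (fun w => if ∃ m ∈ w, m.1 ∉ Q.W then 1 else 0) ?_).trans
        ((Q.leave_bound n σ1 t s hI hX hY).trans ?_)
      · rintro ρ ⟨i, hi, h⟩ w hw hp
        rw [if_pos]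
        have hi' : i < w.length := hw ▸ hi
        exact ⟨w[i], List.getElem_mem hi', by rw [← (Pfx_iff w ρ).1 hp i hi']; exact h⟩
      · exact pow_le_of_le_one zero_le (ENNReal.inv_le_one.2 one_le_two) (by omega)
  have hB : ∀ n, pr σ1 (Q.strat t) s (B n) ≤ 2 * ENNReal.ofReal (Real.exp (-c)) ^ n := by
    intro n
    refine (pr_le_EX _ _ _ _ n
      (fun w => ENNReal.ofReal (Real.exp (c * n)) * gB Q.W w) ?_).trans ?_
    · rintro ρ ⟨hW, hl⟩ w hw hp
      rw [gB_eq Q.W w ρ hp (hw ▸ hW), hw, ← ENNReal.ofReal_mul (Real.exp_pos _).le,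
        ← Real.exp_add, ← ENNReal.ofReal_one]
      apply ENNReal.ofReal_le_ofReal
      rw [Real.one_le_exp_iff]
      linarith
    · rw [EX_mul]
      refine (mul_le_mul_right (Q.loss_bound n σ1 t s hI hX) _).trans ?_
      rw [← ENNReal.ofReal_mul (Real.exp_pos _).le, ← ENNReal.ofReal_pow (Real.exp_pos _).le]
      have h2 : (2 : ℝ≥0∞) = ENNReal.ofReal 2 := by simp
      rw [h2, ← ENNReal.ofReal_mul (by norm_num)]
      apply ENNReal.ofReal_le_ofReal
      rw [hMc]
      have hle : mu (kap G Q.d) Q.M ≤ 1 := by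
        linarith [mu_le hκ (kap_le G Q.d_pos Q.d_le) Q.M, kap_le G Q.d_pos Q.d_le]
      have h3 : (1 - 2 * c) ≤ Real.exp (-(2 * c)) := by
        linarith [Real.add_one_le_exp (-(2 * c))]
      have h4 : (1 - 2 * c) ^ n ≤ Real.exp (-(2 * c)) ^ n :=
        pow_le_pow_left₀ (by linarith) h3 n
      have h5 : Real.exp (c * n) * Real.exp (-(2 * c)) ^ n = Real.exp (-c) ^ n := by
        rw [← Real.exp_nat_mul, ← Real.exp_nat_mul, ← Real.exp_add]; congr 1; ring
      have h6 := Q.psi_le_one s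
      have h7 : 0 ≤ (1 - 2 * c) ^ n := pow_nonneg (by linarith) n
      calc Real.exp (c * n) * (2 * Q.psi s * (1 - 2 * c) ^ n)
          ≤ Real.exp (c * n) * (2 * 1 * Real.exp (-(2 * c)) ^ n) := by gcongr
        _ = 2 * (Real.exp (c * n) * Real.exp (-(2 * c)) ^ n) := by ring
        _ = _ := by rw [h5]
  have hsum : ∑' n, prOuter σ1 (Q.strat t) s (B n) ≠ ∞ := by
    refine ne_top_of_le_ne_top ?_ (ENNReal.tsum_le_tsum hB)
    rw [ENNReal.tsum_mul_left, ENNReal.tsum_geometric]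
    refine ENNReal.mul_ne_top (by simp) (ENNReal.inv_ne_top.2 ?_)
    rw [Ne, tsub_eq_zero_iff_le, not_le, ENNReal.ofReal_lt_one, Real.exp_lt_one_iff]
    linarith
  have hlim := MeasureTheory.measure_limsup_atTop_eq_zero hsum
  calc pr σ1 (Q.strat t) s (evLoss G c)ᶜ
      ≤ prOuter σ1 (Q.strat t) s ((⋃ n, E n) ∪ limsup B atTop) :=
        MeasureTheory.measure_mono hsub
    _ ≤ prOuter σ1 (Q.strat t) s (⋃ n, E n) + prOuter σ1 (Q.strat t) s (limsup B atTop) :=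
        MeasureTheory.measure_union_le _ _
    _ ≤ 2⁻¹ := by rw [hlim, add_zero]; exact hE

end Stratum

end CGS

namespace CGS

variable {G : CGS}

lemma pr_mono (σ1 : G.Strategy1) (σ2 : G.Strategy2) (s : G.S) {Φ Ψ : Set G.Play} (h : Φ ⊆ Ψ) :
    pr σ1 σ2 s Φ ≤ pr σ1 σ2 s Ψ :=
  (prOuter σ1 σ2 s).mono h

lemma one_le_pr_add_compl (σ1 : G.Strategy1) (σ2 : G.Strategy2) (s : G.S) (Φ : Set G.Play) :
    1 ≤ pr σ1 σ2 s Φ + pr σ1 σ2 s Φᶜ := by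
  rw [← pr_univ σ1 σ2 s, ← Set.union_compl_self Φ]
  exact MeasureTheory.measure_union_le (μ := prOuter σ1 σ2 s) Φ Φᶜ

/-- Outside `X*` player 2 has a strategy that forces, with positive probability, a loss growing
linearly at a rate depending only on the game. The induction is along the co-levels `Xs k`: if the
probability were zero, then player 1 could never leave `Xs k` with positive probability, and the
estimate on the stratum `Xs k ∖ Xs (k + 1)` would give probability at least `1 / 2`. -/
theorem exists_spoiling (G : CGS) : ∃ c : ℝ, 0 < c ∧ ∃ σ2 : G.Strategy2, ∀ s, s ∉ G.Xstar →
    ∀ σ1 : G.Strategy1, pr σ1 σ2 s (evLoss G c) ≠ 0 := by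
  obtain ⟨M, Xs, rk, hX0, hanti, hout, hlev⟩ := exists_colevels G
  obtain ⟨d, hd, hd1, htr⟩ := exists_trans_lb G
  obtain ⟨π, hπ, hpos, hsp⟩ := exists_spoiler G Xs hanti (fun k s hs => by
    by_cases h : (G.allow1 s (Xs k)).Nonempty
    · obtain ⟨a, ha⟩ := h
      obtain ⟨b, hb, hb', -⟩ := (hlev k s hs).2 a ha
      exact ⟨b, hb, hb'⟩
    · obtain ⟨b, hb⟩ := G.moves2_nonempty s
      exact ⟨b, hb, fun hbad => h (hbad.2.imp fun a ha => ha.1)⟩)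
  set c := rate G d M with hc
  have key : ∀ k s, s ∈ Xs k → s ∉ Xs (k + 1) → ∀ (t : ℕ) (σ1 : G.Strategy1),
      pr σ1 (markov π hπ t) s (evLoss G c) ≠ 0 := by
    intro k
    induction k using Nat.strong_induction_on with
    | _ k ih =>
    have hstep : ∀ (σ1 : G.Strategy1) (t : ℕ) (s : G.S) (x : G.A × G.A × G.S),
        pr σ1 (markov π hπ t) s (evLoss G c) = 0 → stepW σ1 (markov π hπ t) s x ≠ 0 →
        pr (σ1.shift (s, x.1, x.2.1)) (markov π hπ (t + 1)) x.2.2 (evLoss G c) = 0 ∧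
          x.2.2 ∈ Xs k := by
      intro σ1 t s x h0 hx
      have h1 := stepW_mul_pr_le σ1 (markov π hπ t) s (evLoss G c) x
        (fun m ρ hρ => consP_mem_evLoss m ρ hρ)
      rw [h0, markov_shift] at h1
      have h2 := (mul_eq_zero.1 (le_antisymm h1 zero_le)).resolve_left hx
      refine ⟨h2, ?_⟩
      by_contra hmem
      obtain ⟨i, hi, hi1, hi2⟩ := exists_first_drop hX0 hmem
      exact ih i hi _ hi1 hi2 _ _ h2
    intro s hs hs' t σ1 h0
    let Q : Stratum G :=
      { X := Xs k, Y := Xs (k + 1), rk := rk k, M := M, π := π, hπ := hπ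
        I := fun σ1 t s => pr σ1 (markov π hπ t) s (evLoss G c) = 0
        d := d, d_pos := hd, d_le := hd1, trans_ge := htr
        rk_lt := fun s hs => (hlev k s hs).1
        counter := fun s hs => (hlev k s hs).2
        bad_le := fun s h1 h2 t => (hsp k s h1 h2 t).1
        nonbad_ge := fun s h1 h2 t => (hsp k s h1 h2 t).2
        I_step := fun σ1 t s x _ _ hI hx => hstep σ1 t s x hI hx
        I_allow := by
          intro σ1 t s a _ _ hI ha
          refine ⟨σ1.play_mem _ _ _ ha, fun b hb t' ht' => ?_⟩
          refine (hstep σ1 t s (a, b, t') hI ?_).2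
          exact mul_ne_zero (mul_ne_zero ha (hpos _ _ _ hb)) ht' }
    have h1 := Q.pr_compl_le σ1 t s h0 hs hs'
    have h2 := one_le_pr_add_compl σ1 (Q.strat t) s (evLoss G c)
    have h3 : pr σ1 (Q.strat t) s (evLoss G c) = 0 := h0
    rw [h3, zero_add] at h2
    have h4 := h2.trans h1
    exact absurd h4 (not_le.2 (ENNReal.inv_lt_one.2 ENNReal.one_lt_two))
  refine ⟨c, half_pos (mu_pos (kap_pos G hd) _), markov π hπ 0, fun s hs σ1 => ?_⟩
  obtain ⟨K, hK⟩ := hout s hs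
  obtain ⟨i, _, hi1, hi2⟩ := exists_first_drop hX0 hK
  exact key i s hi1 hi2 0 σ1

/-! ### Averages -/

lemma reward_nonneg (s : G.S) (a b : G.A) : 0 ≤ G.reward s a b := by
  rcases G.reward_bool s a b with h | h <;> rw [h]; norm_num

lemma reward_le_one (s : G.S) (a b : G.A) : G.reward s a b ≤ 1 := by
  rcases G.reward_bool s a b with h | h <;> rw [h]; norm_num

lemma avg_nonneg (ρ : G.Play) (n : ℕ) : 0 ≤ G.avg ρ n :=
  div_nonneg (Finset.sum_nonneg fun _ _ => reward_nonneg _ _ _) (Nat.cast_nonneg n)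

lemma avg_eq (ρ : G.Play) {n : ℕ} (hn : 0 < n) : G.avg ρ n = 1 - loss ρ n / n := by
  have : (n : ℝ) ≠ 0 := by positivity
  rw [avg, loss, Finset.sum_sub_distrib]
  simp only [Finset.sum_const, Finset.card_range, nsmul_eq_mul, mul_one]
  field_simp
  ring

lemma avg_le_one (ρ : G.Play) (n : ℕ) : G.avg ρ n ≤ 1 := by
  rcases Nat.eq_zero_or_pos n with rfl | hn
  · simp [avg]
  · rw [avg_eq ρ hn]
    have := div_nonneg (loss_nonneg ρ n) (Nat.cast_nonneg (α := ℝ) n)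
    linarith

lemma avg_bddAbove (ρ : G.Play) : atTop.IsBoundedUnder (· ≤ ·) (G.avg ρ) :=
  isBoundedUnder_of ⟨1, avg_le_one ρ⟩

lemma avg_bddBelow (ρ : G.Play) : atTop.IsBoundedUnder (· ≥ ·) (G.avg ρ) :=
  isBoundedUnder_of ⟨0, avg_nonneg ρ⟩

lemma limInfAvg_le_limSupAvg (ρ : G.Play) : G.limInfAvg ρ ≤ G.limSupAvg ρ :=
  liminf_le_limsup (avg_bddAbove ρ) (avg_bddBelow ρ)

lemma limSupAvg_le_of_mem_evLoss {c : ℝ} {ρ : G.Play} (h : ρ ∈ evLoss G c) :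
    G.limSupAvg ρ ≤ 1 - c := by
  obtain ⟨C, hC⟩ := h
  have hlim : Tendsto (fun n : ℕ => 1 - c + C / (n : ℝ)) atTop (nhds (1 - c)) := by
    simpa using (tendsto_const_div_atTop_nhds_zero_nat C).const_add (1 - c)
  rw [← hlim.limsup_eq]
  refine limsup_le_limsup ?_ (avg_bddBelow ρ).isCoboundedUnder_le hlim.isBoundedUnder_le
  filter_upwards [eventually_gt_atTop 0] with n hn
  have hn' : (0 : ℝ) < n := by exact_mod_cast hn
  rw [avg_eq ρ hn]
  have : c - C / n ≤ loss ρ n / n := by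
    rw [le_div_iff₀ hn', sub_mul, div_mul_cancel₀ _ hn'.ne']
    exact hC n
  linarith

lemma one_le_limInfAvg {ρ : G.Play} (h : Tendsto (fun n : ℕ => loss ρ n / n) atTop (nhds 0)) :
    1 ≤ G.limInfAvg ρ := by
  have h1 : Tendsto (G.avg ρ) atTop (nhds 1) := by
    have h2 : Tendsto (fun n : ℕ => 1 - loss ρ n / n) atTop (nhds 1) := by
      simpa using h.const_sub 1
    refine h2.congr' ?_
    filter_upwards [eventually_gt_atTop 0] with n hn
    rw [avg_eq ρ hn]
  exact h1.liminf_eq.ge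

lemma measurable_avg (n : ℕ) :
    @Measurable _ _ (playMS G) _ (fun ρ : G.Play => G.avg ρ n) := by
  let : MeasurableSpace G.Move := ⊤
  let := playMS G
  unfold avg
  refine Measurable.div_const (Finset.measurable_sum _ fun i _ => ?_) _
  have h1 : Measurable fun ρ : G.Play => ρ i := measurable_pi_apply i
  exact (measurable_from_top (f := fun m : G.Move => G.reward m.1 m.2.1 m.2.2)).comp h1

lemma measurableSet_evLimInfAvgGe (l : ℝ) :
    @MeasurableSet _ (playMS G) (G.evLimInfAvgGe l) := by
  let := playMS G
  exact measurableSet_le measurable_const (Measurable.liminf measurable_avg)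

lemma measurableSet_evLimSupAvgGe (l : ℝ) :
    @MeasurableSet _ (playMS G) (G.evLimSupAvgGe l) := by
  let := playMS G
  exact measurableSet_le measurable_const (Measurable.limsup measurable_avg)

end CGS

namespace CGS

variable {G : CGS}

/-! ### Player 1: local strategies and potentials on `X*` -/

/-- Potential levels: `potD η c m` is the value of the potential at distance `m` from the top
level. The increments are chosen so large that reaching the next level with probability
`η * c / (1 + potD η c m)` compensates for the largest possible one-step decrease. -/
noncomputable def potD (η c : ℝ) : ℕ → ℝ
  | 0 => 0
  | m + 1 => potD η c m + (1 + potD η c m) ^ 2 / (η * c)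

lemma potD_nonneg {η c : ℝ} (hη : 0 < η) (hc : 0 < c) (m : ℕ) : 0 ≤ potD η c m := by
  induction m with
  | zero => simp [potD]
  | succ m ih => unfold potD; positivity

lemma potD_mono {η c : ℝ} (hη : 0 < η) (hc : 0 < c) : Monotone (potD η c) :=
  monotone_nat_of_le_succ fun m => by
    have := potD_nonneg hη hc m
    rw [potD]
    have : 0 ≤ (1 + potD η c m) ^ 2 / (η * c) := by positivity
    linarith

lemma potD_anti {η η' c : ℝ} (hη : 0 < η) (h : η ≤ η') (hc : 0 < c) (m : ℕ) :
    potD η' c m ≤ potD η c m := by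
  induction m with
  | zero => simp [potD]
  | succ m ih =>
    have h0 := potD_nonneg (hη.trans_le h) hc m
    rw [potD, potD]
    gcongr

lemma sum_toReal {α : Type*} [Fintype α] (p : PMF α) : ∑ x, (p x).toReal = 1 := by
  rw [← ENNReal.toReal_sum fun x _ => p.apply_ne_top x, sum_pmf]
  rfl

/-- Averages of functions bounded above by `K`. -/
lemma sum_le_of_le {α : Type*} [Fintype α] (p : PMF α) (f : α → ℝ) (K : ℝ)
    (h : ∀ x, p x ≠ 0 → f x ≤ K) : ∑ x, (p x).toReal * f x ≤ K := by
  calc ∑ x, (p x).toReal * f x ≤ ∑ x, (p x).toReal * K := by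
        refine Finset.sum_le_sum fun x _ => ?_
        by_cases h0 : p x = 0
        · simp [h0]
        · exact mul_le_mul_of_nonneg_left (h x h0) ENNReal.toReal_nonneg
    _ = K := by rw [← Finset.sum_mul, sum_toReal, one_mul]

lemma sum_le_of_le_of_mem {α : Type*} [Fintype α] (p : PMF α) (f : α → ℝ) (K : ℝ)
    (h : ∀ x, p x ≠ 0 → f x ≤ K) (x₀ : α) {q L : ℝ} (hL : 0 ≤ L) (hq : q ≤ (p x₀).toReal)
    (hx₀ : f x₀ ≤ K - L) : ∑ x, (p x).toReal * f x ≤ K - q * L := by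
  have h1 : ∑ x, (p x).toReal * (f x + if x = x₀ then L else 0) ≤ K := by
    refine sum_le_of_le p _ K fun x hx => ?_
    split_ifs with hxx
    · subst hxx; linarith
    · rw [add_zero]; exact h x hx
  have h2 : ∑ x, (p x).toReal * (f x + if x = x₀ then L else 0) =
      ∑ x, (p x).toReal * f x + (p x₀).toReal * L := by
    simp [mul_add, Finset.sum_add_distrib]
  have h3 := mul_le_mul_of_nonneg_right hq hL
  linarith

/-- For every tolerance `1 / (j + 1)` player 1 has a memoryless strategy `π j` on `X*`, staying in
`X*`, and a bounded potential `v j`, such that the loss in excess of the tolerance minus the gain of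
potential has nonpositive mean in every round. The good action is played with probability close to
one; with the remaining probability all allowed actions are tried, so that a bad action of player 2
may lead to a lower level. The potentials increase with `j`. -/
lemma exists_local (G : CGS) : ∃ (v : ℕ → G.S → ℝ) (B : ℕ → ℝ) (π : ℕ → G.S → PMF G.A),
    (∀ j s, 0 ≤ v j s ∧ v j s ≤ B j) ∧ (∀ s, Monotone fun j => v j s) ∧
    (∀ j s a, π j s a ≠ 0 → a ∈ G.moves1 s) ∧
    (∀ j, ∀ s ∈ G.Xstar, ∀ a, π j s a ≠ 0 → a ∈ G.allow1 s G.Xstar) ∧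
    ∀ j, ∀ s ∈ G.Xstar, ∀ b ∈ G.moves2 s,
      ∑ a, (π j s a).toReal * ∑ s', (G.trans s a b s').toReal *
        (1 - 1 / ((j : ℝ) + 1) - G.reward s a b - v j s' + v j s) ≤ 0 := by
  obtain ⟨N, Y, hY0, hYN, hY⟩ := exists_levels G
  obtain ⟨d, hd, hd1, htr⟩ := exists_trans_lb G
  have hA := card_pos' G
  set c₀ : ℝ := (Fintype.card G.A : ℝ)⁻¹ * d with hc₀
  have hc : 0 < c₀ := by positivity
  let rk : G.S → ℕ := fun s => if h : ∃ i, s ∈ Y i then Nat.find h else 0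
  have rk_le : ∀ s i, s ∈ Y i → rk s ≤ i := fun s i h => by
    have h' : ∃ i, s ∈ Y i := ⟨i, h⟩
    simp only [rk, dif_pos h']
    exact Nat.find_min' h' h
  have rk_mem : ∀ s ∈ G.Xstar, s ∈ Y (rk s) := fun s h => by
    have h' : ∃ i, s ∈ Y i := ⟨N, hYN h⟩
    simp only [rk, dif_pos h']
    exact Nat.find_spec h'
  -- the level of a state of `X*` is a successor, and its good action refers to that level
  have hlev : ∀ s ∈ G.Xstar, ∃ i, rk s = i + 1 ∧ i + 1 ≤ N ∧
      ∃ g, g ∈ G.good1 s G.Xstar (Y i) (Y (i + 1)) := by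
    intro s hs
    have h1 := rk_mem s hs
    have h2 := rk_le s N (hYN hs)
    cases h : rk s with
    | zero => rw [h, hY0] at h1; exact h1.elim
    | succ i => exact ⟨i, rfl, h ▸ h2, hY i (h ▸ h1)⟩
  have hgex : ∀ s, ∃ g ∈ G.moves1 s, ∀ i, s ∈ G.Xstar → rk s = i + 1 →
      g ∈ G.good1 s G.Xstar (Y i) (Y (i + 1)) := by
    intro s
    by_cases hs : s ∈ G.Xstar
    · obtain ⟨i, hi, _, g, hg⟩ := hlev s hs
      refine ⟨g, hg.1.1, fun k _ hk => ?_⟩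
      obtain rfl : k = i := by omega
      exact hg
    · obtain ⟨g, hg⟩ := G.moves1_nonempty s
      exact ⟨g, hg, fun i h => absurd h hs⟩
  choose g hg1 hg using hgex
  let F : G.S → Finset G.A := fun s =>
    if s ∈ G.Xstar then (G.moves1 s).filter fun a => a ∈ G.allow1 s G.Xstar else G.moves1 s
  have hFX : ∀ s ∈ G.Xstar, ∀ a, a ∈ F s ↔ a ∈ G.allow1 s G.Xstar := fun s hs a => by
    simp only [F, if_pos hs, Finset.mem_filter, and_iff_right_iff_imp]
    exact fun h => h.1
  have hgF : ∀ s, g s ∈ F s := fun s => by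
    by_cases hs : s ∈ G.Xstar
    · obtain ⟨i, hi, _⟩ := hlev s hs
      exact (hFX s hs _).2 (hg s i hs hi).1
    · simp only [F, if_neg hs]; exact hg1 s
  have hFm : ∀ s, F s ⊆ G.moves1 s := fun s => by
    by_cases hs : s ∈ G.Xstar
    · simp only [F, if_pos hs]; exact Finset.filter_subset _ _
    · simp only [F, if_neg hs]; exact subset_rfl
  let η : ℕ → ℝ := fun j => 1 / ((j : ℝ) + 1)
  have hη : ∀ j, 0 < η j := fun j => by positivity
  have hη1 : ∀ j, η j ≤ 1 := fun j => by
    simp only [η]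
    rw [div_le_one (by positivity)]
    have := Nat.cast_nonneg (α := ℝ) j
    linarith
  let v : ℕ → G.S → ℝ := fun j s => potD (η j) c₀ (N - rk s)
  let e : ℕ → G.S → ℝ := fun j s => η j / (1 + v j s)
  have hv0 : ∀ j s, 0 ≤ v j s := fun j s => potD_nonneg (hη j) hc _
  have he0 : ∀ j s, 0 ≤ e j s := fun j s =>
    div_nonneg (hη j).le (by have := hv0 j s; linarith)
  have he1 : ∀ j s, e j s ≤ 1 := fun j s => by
    have := hv0 j s
    have := hη1 j
    simp only [e]
    rw [div_le_one (by linarith)]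
    linarith
  have he1' : ∀ j s, ENNReal.ofReal (e j s) ≤ 1 := fun j s => by
    simpa using ENNReal.ofReal_le_ofReal (he1 j s)
  let U : G.S → PMF G.A := fun s => PMF.uniformOfFinset (F s) ⟨g s, hgF s⟩
  let π : ℕ → G.S → PMF G.A := fun j s =>
    mix (ENNReal.ofReal (e j s)) (he1' j s) (PMF.pure (g s)) (U s)
  have hUF : ∀ s a, U s a ≠ 0 → a ∈ F s := fun s a h =>
    (PMF.mem_support_uniformOfFinset_iff _ _).1 ((PMF.mem_support_iff _ _).2 h)
  have hπF : ∀ j s a, π j s a ≠ 0 → a ∈ F s := by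
    intro j s a h
    by_contra hmem
    apply h
    have h1 : U s a = 0 := by
      by_contra h0; exact hmem (hUF s a h0)
    have h2 : a ≠ g s := fun h => hmem (h ▸ hgF s)
    simp only [π]
    rw [mix_apply, h1, PMF.pure_apply, if_neg h2]
    simp
  refine ⟨v, fun j => potD (η j) c₀ N, π, fun j s => ⟨hv0 j s, ?_⟩, fun s i j hij => ?_,
    fun j s a h => hFm s (hπF j s a h), fun j s hs a h => (hFX s hs a).1 (hπF j s a h), ?_⟩
  · exact potD_mono (hη j) hc (Nat.sub_le _ _)
  · refine potD_anti (hη j) ?_ hc _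
    have : (i : ℝ) ≤ j := by exact_mod_cast hij
    simp only [η]
    gcongr
  intro j s hs b hb
  obtain ⟨i, hi, hiN, -⟩ := hlev s hs
  have hgood := hg s i hs hi
  set f : G.A → ℝ := fun a => ∑ s', (G.trans s a b s').toReal *
        (1 - 1 / ((j : ℝ) + 1) - G.reward s a b - v j s' + v j s) with hf
  have hπr : ∀ a, (π j s a).toReal =
      (1 - e j s) * (if a = g s then 1 else 0) + e j s * (U s a).toReal := by
    intro a
    simp only [π]
    rw [mix_apply, ENNReal.toReal_add, ENNReal.toReal_mul, ENNReal.toReal_mul,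
      ENNReal.toReal_sub_of_le (he1' j s) ENNReal.one_ne_top, ENNReal.toReal_ofReal (he0 j s),
      PMF.pure_apply]
    · congr 2
      split_ifs <;> simp
    · exact ENNReal.mul_ne_top (by simp) (PMF.apply_ne_top _ _)
    · exact ENNReal.mul_ne_top ENNReal.ofReal_ne_top (PMF.apply_ne_top _ _)
  have hsum : ∑ a, (π j s a).toReal * f a =
      (1 - e j s) * f (g s) + e j s * ∑ a, (U s a).toReal * f a := by
    simp only [hπr, add_mul, Finset.sum_add_distrib, Finset.mul_sum]
    congr 1
    · simp
    · exact Finset.sum_congr rfl fun a _ => by ring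
  have hηj : 1 / ((j : ℝ) + 1) = η j := rfl
  have hfle : ∀ a, f a ≤ 1 - η j + v j s := fun a =>
    sum_le_of_le _ _ _ fun s' _ => by
      have := hv0 j s'
      have := reward_nonneg s a b
      rw [hηj]
      linarith
  have hUle : ∑ a, (U s a).toReal * f a ≤ 1 - η j + v j s :=
    sum_le_of_le _ _ _ fun a _ => hfle a
  have hev : e j s * (1 + v j s) = η j :=
    div_mul_cancel₀ _ (by have := hv0 j s; linarith)
  rw [hsum]
  have h1e : 0 ≤ 1 - e j s := by linarith [he1 j s]
  by_cases hbad : b ∈ G.bad2 s G.Xstar (Y i)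
  · obtain ⟨-, a, ha, t, ht, htY⟩ := hbad
    have hrt := rk_le t i htY
    have hvt : v j s + (1 + v j s) ^ 2 / (η j * c₀) ≤ v j t := by
      have h1 : N - i = (N - rk s) + 1 := by omega
      have h2 : potD (η j) c₀ (N - i) ≤ v j t := potD_mono (hη j) hc (by omega)
      rwa [h1, potD] at h2
    have hft : f a ≤ (1 - η j + v j s) - d * v j t := by
      refine sum_le_of_le_of_mem _ _ _ (fun s' _ => ?_) t (hv0 j t) ?_ ?_
      · have := hv0 j s'
        have := reward_nonneg s a b
        rw [hηj]
        linarith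
      · have := ENNReal.toReal_mono (PMF.apply_ne_top _ _) (htr s a b t ht)
        rwa [ENNReal.toReal_ofReal hd.le] at this
      · have := reward_nonneg s a b
        rw [hηj]
        linarith
    have hUa : (Fintype.card G.A : ℝ)⁻¹ ≤ (U s a).toReal := by
      have := ENNReal.toReal_mono (PMF.apply_ne_top (U s) a)
        (uniform_ge (F s) ⟨g s, hgF s⟩ a ((hFX s hs a).2 ha))
      simpa using this
    have hU2 : ∑ a, (U s a).toReal * f a ≤
        (1 - η j + v j s) - (Fintype.card G.A : ℝ)⁻¹ * (d * v j t) :=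
      sum_le_of_le_of_mem _ _ _ (fun a _ => hfle a) a (mul_nonneg hd.le (hv0 j t)) hUa hft
    have h1 := mul_le_mul_of_nonneg_left (hfle (g s)) h1e
    have h2 := mul_le_mul_of_nonneg_left hU2 (he0 j s)
    have h3 : 1 + v j s ≤ e j s * (c₀ * v j t) := by
      have h4 : (1 + v j s) ^ 2 / (η j * c₀) ≤ v j t := by linarith [hv0 j s]
      have h5 : (1 + v j s) ^ 2 / η j ≤ c₀ * v j t := by
        calc (1 + v j s) ^ 2 / η j = c₀ * ((1 + v j s) ^ 2 / (η j * c₀)) := by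
              field_simp
          _ ≤ _ := by gcongr
      have h6 := mul_le_mul_of_nonneg_left h5 (he0 j s)
      have h7 : e j s * ((1 + v j s) ^ 2 / η j) = 1 + v j s := by
        have h8 := (hη j).ne'
        calc e j s * ((1 + v j s) ^ 2 / η j) = (e j s * (1 + v j s)) * (1 + v j s) / η j := by ring
          _ = 1 + v j s := by rw [hev]; field_simp
      linarith
    have h9 : e j s * ((Fintype.card G.A : ℝ)⁻¹ * (d * v j t)) = e j s * (c₀ * v j t) := by
      rw [hc₀]; ring
    have := hη j
    linarith [mul_sub (e j s) (1 - η j + v j s) ((Fintype.card G.A : ℝ)⁻¹ * (d * v j t))]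
  · obtain ⟨hsup, hr⟩ := hgood.2 b hb hbad
    have h1 : f (g s) ≤ -η j := by
      refine sum_le_of_le _ _ _ fun s' hs' => ?_
      have h2 : v j s ≤ v j s' := potD_mono (hη j) hc (by
        have := rk_le s' (i + 1) (hsup hs')
        omega)
      rw [hr, hηj]
      linarith
    have h2 := mul_le_mul_of_nonneg_left h1 h1e
    have h3 := mul_le_mul_of_nonneg_left hUle (he0 j s)
    nlinarith

end CGS

namespace CGS

variable {G : CGS}

/-! ### Player 1: an exponential bound for the excess loss -/

/-- Sum of `1 - η - r` along a word, where the tolerance `η` depends on time and the clock is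
started at time `t`. -/
noncomputable def exc (η : ℕ → ℝ) : ℕ → List G.Move → ℝ
  | _, [] => 0
  | t, m :: w => (1 - η t - G.reward m.1 m.2.1 m.2.2) + exc η (t + 1) w

lemma exc_eq (η : ℕ → ℝ) (w : List G.Move) : ∀ (t : ℕ) (ρ : G.Play), Pfx w ρ →
    exc η t w = loss ρ w.length - ∑ i ∈ Finset.range w.length, η (t + i) := by
  induction w with
  | nil => intro t ρ _; simp [exc, loss]
  | cons m w ih =>
    intro t ρ h
    rw [exc, ih (t + 1) _ h.2, ← h.1, List.length_cons, loss, loss, Finset.sum_range_succ',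
      Finset.sum_range_succ']
    have : ∀ i, t + 1 + i = t + (i + 1) := fun i => by ring
    simp only [this, add_zero]
    ring

/-- The drift of a potential, averaged over the action of player 2 as well. -/
lemma sum_stepW_le (σ1 : G.Strategy1) (σ2 : G.Strategy2) (s : G.S)
    (y : G.A → G.A → G.S → ℝ)
    (h : ∀ b ∈ G.moves2 s, ∑ a, (σ1.play [] s a).toReal *
      ∑ s', (G.trans s a b s').toReal * y a b s' ≤ 0) :
    ∑ x : G.A × G.A × G.S, (stepW σ1 σ2 s x).toReal * y x.1 x.2.1 x.2.2 ≤ 0 := by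
  have h1 : ∑ x : G.A × G.A × G.S, (stepW σ1 σ2 s x).toReal * y x.1 x.2.1 x.2.2 =
      ∑ b, (σ2.play [] s b).toReal * ∑ a, (σ1.play [] s a).toReal *
        ∑ s', (G.trans s a b s').toReal * y a b s' := by
    simp only [Fintype.sum_prod_type, stepW, ENNReal.toReal_mul, Finset.mul_sum]
    rw [Finset.sum_comm]
    exact Finset.sum_congr rfl fun b _ => Finset.sum_congr rfl fun a _ =>
      Finset.sum_congr rfl fun s' _ => by ring
  rw [h1]
  refine Finset.sum_nonpos fun b _ => ?_
  by_cases h0 : σ2.play [] s b = 0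
  · simp [h0]
  · exact mul_nonpos_of_nonneg_of_nonpos ENNReal.toReal_nonneg (h b (σ2.play_mem _ _ _ h0))

lemma stepW_ne_top (σ1 : G.Strategy1) (σ2 : G.Strategy2) (s : G.S) (x : G.A × G.A × G.S) :
    stepW σ1 σ2 s x ≠ ⊤ :=
  ENNReal.mul_ne_top (ENNReal.mul_ne_top (PMF.apply_ne_top _ _) (PMF.apply_ne_top _ _))
    (PMF.apply_ne_top _ _)

/-- The exponential moment of the excess loss over `n` rounds, for a small parameter `θ`. -/
lemma EX_exp_le (v : ℕ → G.S → ℝ) (η : ℕ → ℝ) (π : ℕ → G.S → PMF G.A)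
    (hπ : ∀ t s a, π t s a ≠ 0 → a ∈ G.moves1 s)
    (hv0 : ∀ t s, 0 ≤ v t s) (hvm : ∀ s, Monotone fun t => v t s)
    (hη0 : ∀ t, 0 ≤ η t) (hη1 : ∀ t, η t ≤ 1)
    (hallow : ∀ t, ∀ s ∈ G.Xstar, ∀ a, π t s a ≠ 0 → a ∈ G.allow1 s G.Xstar)
    (hdrift : ∀ t, ∀ s ∈ G.Xstar, ∀ b ∈ G.moves2 s,
      ∑ a, (π t s a).toReal * ∑ s', (G.trans s a b s').toReal *
        (1 - η t - G.reward s a b - v t s' + v t s) ≤ 0)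
    {θ B : ℝ} (hθ : 0 ≤ θ) (hθB : θ * (1 + B) ≤ 1) (n : ℕ) :
    ∀ (t : ℕ), (∀ i ≤ n, ∀ s, v (t + i) s ≤ B) → ∀ (σ2 : G.Strategy2) (s : G.S), s ∈ G.Xstar →
      EX n (markov π hπ t) σ2 s (fun w => ENNReal.ofReal (Real.exp (θ * exc η t w))) ≤
        ENNReal.ofReal (Real.exp (θ * (B - v t s) + n * (θ * (1 + B)) ^ 2)) := by
  induction n with
  | zero =>
    intro t hB σ2 s _
    rw [EX]
    refine ENNReal.ofReal_le_ofReal (Real.exp_le_exp.2 ?_)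
    have := mul_nonneg hθ (sub_nonneg.2 (hB 0 le_rfl s))
    simpa [exc] using this
  | succ n ih =>
    intro t hB σ2 s hs
    set K : ℝ := Real.exp (θ * (B - v t s) + n * (θ * (1 + B)) ^ 2) with hK
    have hK0 : 0 < K := Real.exp_pos _
    let y : G.A → G.A → G.S → ℝ := fun a b s' => 1 - η t - G.reward s a b - v t s' + v t s
    have hvB : ∀ s, v t s ≤ B := fun s => hB 0 (Nat.zero_le _) s
    have hy : ∀ a b s', |y a b s'| ≤ 1 + B := fun a b s' => by
      have h1 := hv0 t s
      have h2 := hvB s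
      have h3 := hv0 t s'
      have h4 := hvB s'
      have h5 := hη0 t
      have h6 := hη1 t
      have h7 := reward_nonneg s a b
      have h8 := reward_le_one s a b
      simp only [y]
      rw [abs_le]
      constructor <;> linarith
    let q : G.A × G.A × G.S → ℝ := fun x =>
      1 + θ * y x.1 x.2.1 x.2.2 + (θ * (1 + B)) ^ 2
    have hexp : ∀ a b s', Real.exp (θ * y a b s') ≤ q (a, b, s') := fun a b s' => by
      have h0 : |θ * y a b s'| ≤ θ * (1 + B) := by
        rw [abs_mul, abs_of_nonneg hθ]
        exact mul_le_mul_of_nonneg_left (hy a b s') hθ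
      have h1 := (abs_le.1 (Real.abs_exp_sub_one_sub_id_le (h0.trans hθB))).2
      have h2 : (θ * y a b s') ^ 2 ≤ (θ * (1 + B)) ^ 2 := by
        rw [← sq_abs]
        exact pow_le_pow_left₀ (abs_nonneg _) h0 2
      simp only [q]
      linarith
    have hq0 : ∀ x, 0 ≤ q x := fun x => (Real.exp_pos _).le.trans (hexp x.1 x.2.1 x.2.2)
    calc EX (n + 1) (markov π hπ t) σ2 s (fun w => ENNReal.ofReal (Real.exp (θ * exc η t w)))
        ≤ ∑ x, stepW (markov π hπ t) σ2 s x * ENNReal.ofReal (q x * K) := by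
          rw [EX]
          refine Finset.sum_le_sum fun x _ => ?_
          by_cases h0 : stepW (markov π hπ t) σ2 s x = 0
          · rw [h0]; simp
          refine mul_le_mul_right ?_ _
          obtain ⟨a, b, s'⟩ := x
          have ha : π t s a ≠ 0 := fun h => h0 (by
            simp only [stepW, markov, List.length_nil, add_zero, h, zero_mul])
          have hb : σ2.play [] s b ≠ 0 := fun h => h0 (by simp [stepW, h])
          have hs' : G.trans s a b s' ≠ 0 := fun h => h0 (by simp [stepW, h])
          have hX : s' ∈ G.Xstar :=
            (hallow t s hs a ha).2 b (σ2.play_mem _ _ _ hb) hs'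
          rw [markov_shift]
          have h1 : ∀ w : List G.Move, ENNReal.ofReal (Real.exp (θ * exc η t ((s, a, b) :: w))) =
              ENNReal.ofReal (Real.exp (θ * (1 - η t - G.reward s a b))) *
                ENNReal.ofReal (Real.exp (θ * exc η (t + 1) w)) := fun w => by
            rw [exc, mul_add, Real.exp_add, ENNReal.ofReal_mul (Real.exp_pos _).le]
          simp only [h1]
          rw [EX_mul]
          refine (mul_le_mul_right (ih (t + 1) (fun i hi s => ?_) _ s' hX) _).trans ?_
          · have := hB (i + 1) (by omega) s
            rwa [show t + (i + 1) = t + 1 + i by ring] at this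
          · rw [← ENNReal.ofReal_mul (Real.exp_pos _).le]
            refine ENNReal.ofReal_le_ofReal ?_
            refine le_trans ?_ (mul_le_mul_of_nonneg_right (hexp a b s') hK0.le)
            rw [hK, ← Real.exp_add, ← Real.exp_add, Real.exp_le_exp]
            have h2 := mul_le_mul_of_nonneg_left (hvm s' (Nat.le_succ t)) hθ
            simp only [Nat.succ_eq_add_one] at h2
            simp only [y]
            linarith
      _ = ENNReal.ofReal (∑ x, (stepW (markov π hπ t) σ2 s x).toReal * (q x * K)) := by
          rw [ENNReal.ofReal_sum_of_nonneg fun x _ =>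
            mul_nonneg ENNReal.toReal_nonneg (mul_nonneg (hq0 x) hK0.le)]
          refine Finset.sum_congr rfl fun x _ => ?_
          rw [ENNReal.ofReal_mul ENNReal.toReal_nonneg, ENNReal.ofReal_toReal (stepW_ne_top _ _ _ _)]
      _ ≤ ENNReal.ofReal (Real.exp (θ * (B - v t s) + ((n + 1 : ℕ) : ℝ) * (θ * (1 + B)) ^ 2)) := by
          refine ENNReal.ofReal_le_ofReal ?_
          have h1 : ∑ x, (stepW (markov π hπ t) σ2 s x).toReal = 1 := by
            rw [← ENNReal.toReal_sum fun x _ => stepW_ne_top _ _ _ _, stepW_sum]; rfl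
          have h2 : ∑ x : G.A × G.A × G.S, (stepW (markov π hπ t) σ2 s x).toReal *
              y x.1 x.2.1 x.2.2 ≤ 0 :=
            sum_stepW_le (markov π hπ t) σ2 s y (fun b hb => by
              simpa [markov] using hdrift t s hs b hb)
          have h3 : ∑ x, (stepW (markov π hπ t) σ2 s x).toReal * (q x * K) =
              (1 + (θ * (1 + B)) ^ 2 + θ * ∑ x : G.A × G.A × G.S,
                (stepW (markov π hπ t) σ2 s x).toReal * y x.1 x.2.1 x.2.2) * K := by
            have h4 : ∀ x : G.A × G.A × G.S, (stepW (markov π hπ t) σ2 s x).toReal * (q x * K) =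
                ((stepW (markov π hπ t) σ2 s x).toReal * (1 + (θ * (1 + B)) ^ 2) +
                  θ * ((stepW (markov π hπ t) σ2 s x).toReal * y x.1 x.2.1 x.2.2)) * K :=
              fun x => by simp only [q]; ring
            simp only [h4]
            rw [← Finset.sum_mul, Finset.sum_add_distrib, ← Finset.sum_mul, h1, ← Finset.mul_sum,
              one_mul]
          rw [h3]
          have h5 : 1 + (θ * (1 + B)) ^ 2 ≤ Real.exp ((θ * (1 + B)) ^ 2) := by
            have := Real.add_one_le_exp ((θ * (1 + B)) ^ 2)
            linarith
          have h6 := mul_nonpos_of_nonneg_of_nonpos hθ h2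
          calc _ ≤ Real.exp ((θ * (1 + B)) ^ 2) * K := by
                refine mul_le_mul_of_nonneg_right ?_ hK0.le
                linarith
            _ = _ := by
                rw [hK, ← Real.exp_add]
                congr 1
                push_cast
                ring

/-! ### Player 1: slowly improving the tolerance -/

/-- A slowly growing schedule. -/
lemma exists_schedule (f : ℕ → ℝ) : ∃ J : ℕ → ℕ, Monotone J ∧ Tendsto J atTop atTop ∧
    ∀ᶠ n in atTop, f (J n) ≤ Real.log n := by
  let C : ℕ → ℕ := fun j => ⌈Real.exp (f j)⌉₊
  refine ⟨fun t => Nat.findGreatest (fun j => C j ≤ t) t, fun s t hst => ?_, ?_, ?_⟩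
  · exact Nat.findGreatest_mono (fun j (hj : C j ≤ s) => hj.trans hst) hst
  · refine tendsto_atTop.2 fun j => ?_
    filter_upwards [eventually_ge_atTop (max j (C j))] with t ht
    exact Nat.le_findGreatest ((le_max_left _ _).trans ht) ((le_max_right _ _).trans ht)
  · filter_upwards [eventually_ge_atTop (C 0)] with t ht
    have h1 : C (Nat.findGreatest (fun j => C j ≤ t) t) ≤ t :=
      Nat.findGreatest_spec (P := fun j => C j ≤ t) (Nat.zero_le t) ht
    have h2 : Real.exp (f (Nat.findGreatest (fun j => C j ≤ t) t)) ≤ t := Nat.ceil_le.1 h1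
    exact (Real.le_log_iff_exp_le ((Real.exp_pos _).trans_le h2)).2 h2

lemma summable_aux {ε : ℝ} (hε : 0 < ε) :
    Summable fun n : ℕ => (n : ℝ) * Real.exp (-(ε * Real.sqrt n)) := by
  have h : Summable fun n : ℕ => 720 / ε ^ 6 * (1 / (n : ℝ) ^ 2) :=
    (Real.summable_one_div_nat_pow.2 one_lt_two).mul_left _
  refine Summable.of_nonneg_of_le (fun n => by positivity) (fun n => ?_) h
  rcases Nat.eq_zero_or_pos n with rfl | hn
  · simp
  have hn' : (0 : ℝ) < n := by exact_mod_cast hn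
  have h1 := Real.pow_div_factorial_le_exp (ε * Real.sqrt n) (by positivity) 6
  have h2 : Real.sqrt n ^ 6 = (n : ℝ) ^ 3 := by
    rw [show 6 = 2 * 3 by norm_num, pow_mul, Real.sq_sqrt hn'.le]
  have h3 : ((Nat.factorial 6 : ℕ) : ℝ) = 720 := by norm_num [Nat.factorial]
  rw [mul_pow, h2, h3] at h1
  rw [Real.exp_neg]
  calc (n : ℝ) * (Real.exp (ε * Real.sqrt n))⁻¹ ≤ n * (ε ^ 6 * (n : ℝ) ^ 3 / 720)⁻¹ := by
        gcongr
    _ = 720 / ε ^ 6 * (1 / (n : ℝ) ^ 2) := by field_simp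

/-- From `X*` player 1 can ensure that the average reward tends to one almost surely. The memoryless
strategies for the tolerances `1 / (j + 1)` are played one after the other, so slowly that the
potential bound at time `n` is of order `√(log n)`; the exponential moment bound with parameter
`1 / √n` and the Borel–Cantelli lemma then control the excess loss. -/
theorem exists_winning (G : CGS) : ∃ σ1 : G.Strategy1, ∀ s ∈ G.Xstar, ∀ σ2 : G.Strategy2,
    pr σ1 σ2 s (G.evLimInfAvgGe 1)ᶜ = 0 := by
  obtain ⟨v, B, π, hv, hvm, hπ, hallow, hdrift⟩ := exists_local G
  obtain ⟨J, hJm, hJt, hJ⟩ := exists_schedule fun j => 2 * (1 + B j) ^ 2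
  let η : ℕ → ℝ := fun t => 1 / ((J t : ℝ) + 1)
  have hη0 : ∀ t, 0 ≤ η t := fun t => by positivity
  have hη1 : ∀ t, η t ≤ 1 := fun t => by
    simp only [η]
    rw [div_le_one (by positivity)]
    have := Nat.cast_nonneg (α := ℝ) (J t)
    linarith
  have hηt : Tendsto η atTop (nhds 0) :=
    (tendsto_one_div_add_atTop_nhds_zero_nat (𝕜 := ℝ)).comp hJt
  obtain ⟨n₀, hn₀⟩ := eventually_atTop.1 hJ
  have hB0 : ∀ j, 0 ≤ B j := fun j => by
    obtain ⟨s⟩ := G.nonemptyS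
    exact (hv j s).1.trans (hv j s).2
  refine ⟨markov (fun t => π (J t)) (fun t => hπ (J t)) 0, fun s hs σ2 => ?_⟩
  set σ1 : G.Strategy1 := markov (fun t => π (J t)) (fun t => hπ (J t)) 0 with hσ1
  let x : G.Play → ℕ → ℝ := fun ρ n => loss ρ n - ∑ i ∈ Finset.range n, η i
  let E : ℝ → ℕ → Set G.Play := fun ε n => {ρ | max 1 n₀ ≤ n ∧ ε * n ≤ x ρ n}
  have hE : ∀ ε, 0 < ε → ∀ n, pr σ1 σ2 s (E ε n) ≤
      ENNReal.ofReal (n * Real.exp (-(ε * Real.sqrt n))) := by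
    intro ε hε n
    by_cases hn : max 1 n₀ ≤ n
    swap
    · have : E ε n = ∅ := Set.eq_empty_of_forall_notMem fun ρ hρ => hn hρ.1
      rw [this, pr, MeasureTheory.measure_empty]
      exact zero_le
    have hn1 : (1 : ℝ) ≤ n := by exact_mod_cast (le_max_left _ _).trans hn
    have hn0 : (0 : ℝ) < n := by linarith
    set b := B (J n) with hb
    have hb0 : 0 ≤ b := hB0 _
    have hlog : 2 * (1 + b) ^ 2 ≤ Real.log n := hn₀ n ((le_max_right _ _).trans hn)
    set r := Real.sqrt n with hr
    have hr1 : 1 ≤ r := Real.one_le_sqrt.2 hn1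
    have hr0 : 0 < r := by linarith
    have hrr : r * r = n := Real.mul_self_sqrt hn0.le
    have hbr : (1 + b) ≤ r := by
      apply Real.le_sqrt_of_sq_le
      have := Real.log_le_sub_one_of_pos hn0
      nlinarith [sq_nonneg (1 + b)]
    have hθB : r⁻¹ * (1 + b) ≤ 1 := by
      rw [inv_mul_le_iff₀ hr0, mul_one]; exact hbr
    have h1 := EX_exp_le (fun t => v (J t)) η (fun t => π (J t)) (fun t => hπ (J t))
      (fun t s => (hv (J t) s).1) (fun s => (hvm s).comp hJm) hη0 hη1
      (fun t => hallow (J t)) (fun t => hdrift (J t)) (inv_nonneg.2 hr0.le) hθB n 0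
      (fun i hi s => by
        rw [zero_add]
        exact (hvm s (hJm hi)).trans (hv (J n) s).2) σ2 s hs
    calc pr σ1 σ2 s (E ε n) ≤ EX n σ1 σ2 s (fun w => ENNReal.ofReal (Real.exp (-(ε * r))) *
            ENNReal.ofReal (Real.exp (r⁻¹ * exc η 0 w))) := by
          refine pr_le_EX _ _ _ _ _ _ fun ρ hρ w hw hp => ?_
          rw [← ENNReal.ofReal_mul (Real.exp_pos _).le, ← Real.exp_add]
          refine ENNReal.one_le_ofReal.2 (Real.one_le_exp ?_)
          have h2 : exc η 0 w = x ρ n := by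
            rw [exc_eq η w 0 ρ hp, hw]; simp [x]
          rw [h2]
          have h3 := mul_le_mul_of_nonneg_left hρ.2 (inv_nonneg.2 hr0.le)
          have h4 : r⁻¹ * (ε * n) = ε * r := by
            rw [← hrr]; field_simp
          linarith
      _ ≤ ENNReal.ofReal (Real.exp (-(ε * r))) * ENNReal.ofReal (Real.exp (r⁻¹ * (b - v (J 0) s)
            + n * (r⁻¹ * (1 + b)) ^ 2)) := by
          rw [EX_mul]
          exact mul_le_mul_right h1 _
      _ ≤ ENNReal.ofReal (n * Real.exp (-(ε * r))) := by
          rw [← ENNReal.ofReal_mul (Real.exp_pos _).le]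
          refine ENNReal.ofReal_le_ofReal ?_
          rw [mul_comm]
          refine mul_le_mul_of_nonneg_right ?_ (Real.exp_pos _).le
          rw [← Real.le_log_iff_exp_le hn0]
          refine le_trans ?_ hlog
          have h5 : (n : ℝ) * (r⁻¹ * (1 + b)) ^ 2 = (1 + b) ^ 2 := by
            rw [← hrr]; field_simp
          have h6 : r⁻¹ * (b - v (J 0) s) ≤ b := by
            have h7 : r⁻¹ ≤ 1 := inv_le_one_of_one_le₀ hr1
            have h8 := (hv (J 0) s).1
            have h9 : r⁻¹ * (b - v (J 0) s) ≤ r⁻¹ * b :=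
              mul_le_mul_of_nonneg_left (by linarith) (inv_nonneg.2 hr0.le)
            exact h9.trans (mul_le_of_le_one_left hb0 h7)
          rw [h5]
          nlinarith
  have hBC : ∀ m : ℕ, prOuter σ1 σ2 s {ρ | ∃ᶠ n in atTop, ρ ∈ E (1 / ((m : ℝ) + 1)) n} = 0 := by
    intro m
    have hε : (0 : ℝ) < 1 / ((m : ℝ) + 1) := by positivity
    refine MeasureTheory.measure_setOfPred_frequently_eq_zero ?_
    refine ne_top_of_le_ne_top ?_ (ENNReal.tsum_le_tsum (hE _ hε))
    exact (summable_aux hε).tsum_ofReal_ne_top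
  have hU : prOuter σ1 σ2 s (⋃ m : ℕ, {ρ | ∃ᶠ n in atTop, ρ ∈ E (1 / ((m : ℝ) + 1)) n}) = 0 :=
    MeasureTheory.measure_iUnion_null hBC
  refine MeasureTheory.measure_mono_null (μ := prOuter σ1 σ2 s) ?_ hU
  intro ρ hρ
  by_contra hnot
  apply hρ
  simp only [Set.mem_iUnion, Set.mem_ofPred_eq, not_exists, not_frequently] at hnot
  refine one_le_limInfAvg ?_
  have hces : Tendsto (fun n : ℕ => (n⁻¹ : ℝ) * ∑ i ∈ Finset.range n, η i) atTop (nhds 0) :=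
    hηt.cesaro
  rw [Metric.tendsto_atTop']
  intro ε hε
  obtain ⟨m, hm⟩ := exists_nat_one_div_lt (half_pos hε)
  have hev : ∀ᶠ n in atTop, loss ρ n / n < ε := by
    filter_upwards [hnot m, hces.eventually (gt_mem_nhds (half_pos hε)),
      eventually_ge_atTop (max 1 n₀)] with n h1 h2 h3
    have hn0 : (0 : ℝ) < n := by
      have : 1 ≤ n := (le_max_left _ _).trans h3
      exact_mod_cast this
    have h4 : x ρ n < 1 / ((m : ℝ) + 1) * n := by
      by_contra hcon
      exact h1 ⟨h3, not_lt.1 hcon⟩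
    have h5 : loss ρ n / n = x ρ n / n + (n⁻¹ : ℝ) * ∑ i ∈ Finset.range n, η i := by
      simp only [x]; field_simp; ring
    have h6 : x ρ n / n < 1 / ((m : ℝ) + 1) := by rwa [div_lt_iff₀ hn0]
    rw [h5]
    linarith
  obtain ⟨n₁, hn₁⟩ := eventually_atTop.1 hev
  refine ⟨n₁, fun n hn => ?_⟩
  rw [Real.dist_eq, sub_zero, abs_of_nonneg (div_nonneg (loss_nonneg ρ n) (Nat.cast_nonneg n))]
  exact hn₁ n hn.le

end CGS

namespace CGS

variable {G : CGS}

/-! ### Determinacy -/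

lemma Almost1_mono {Φ Ψ : Set G.Play} (h : Φ ⊆ Ψ) : G.Almost1 Φ ⊆ G.Almost1 Ψ :=
  fun _ ⟨σ1, hσ⟩ => ⟨σ1, fun σ2 =>
    le_antisymm (pr_le_one _ _ _ _) ((hσ σ2).ge.trans (pr_mono _ _ _ h))⟩

lemma Positive2_mono {Φ Ψ : Set G.Play} (h : Φ ⊆ Ψ) : G.Positive2 Φ ⊆ G.Positive2 Ψ :=
  fun _ ⟨σ2, hσ⟩ => ⟨σ2, fun σ1 => (hσ σ1).trans_le (pr_mono _ _ _ h)⟩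

/-- A measurable event disjoint from the loss event is not won almost surely outside `X*`. -/
lemma Almost1_subset_of_disjoint {c : ℝ} {σ2 : G.Strategy2}
    (hσ : ∀ s, s ∉ G.Xstar → ∀ σ1 : G.Strategy1, pr σ1 σ2 s (evLoss G c) ≠ 0) {Φ : Set G.Play}
    (hΦ : @MeasurableSet _ (playMS G) Φ) (hd : evLoss G c ⊆ Φᶜ) : G.Almost1 Φ ⊆ G.Xstar := by
  rintro s ⟨σ1, h1⟩
  by_contra hs
  refine hσ s hs σ1 ?_
  have h := pr_add_compl σ1 σ2 s Φ hΦ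
  rw [h1 σ2] at h
  have h0 : pr σ1 σ2 s Φᶜ = 0 := by
    have : (1 : ℝ≥0∞) + pr σ1 σ2 s Φᶜ = 1 + 0 := by rw [h, add_zero]
    exact (ENNReal.add_right_inj ENNReal.one_ne_top).1 this
  exact le_antisymm ((pr_mono _ _ _ hd).trans h0.le) zero_le

/-- An event avoiding `LimInfAvg(1)` is not won with positive probability by player 2 in `X*`. -/
lemma Positive2_subset {Φ : Set G.Play} (h : Φ ⊆ (G.evLimInfAvgGe 1)ᶜ) :
    G.Positive2 Φ ⊆ G.Xstarᶜ := by
  rintro s ⟨σ2, h2⟩ hs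
  obtain ⟨σ1, h1⟩ := exists_winning G
  exact (h2 σ1).ne' (le_antisymm ((pr_mono _ _ _ h).trans (h1 s hs σ2).le) zero_le)

end CGS

/-- Theorem 1 of the paper, qualitative determinacy for almost-sure
winning: `X* = Almost₁(LimInfAvg(1)) = Almost₁(LimSupAvg(1)) =
⋂_{ε>0} Almost₁(LimInfAvg(1-ε)) = ⋂_{ε>0} Almost₁(LimSupAvg(1-ε))`, and
`S∖X* = Positive₂(LimInfAvg < 1) = Positive₂(LimSupAvg < 1) =
⋃_{c>0} Positive₂(LimInfAvg ≤ 1-c) = ⋃_{c>0} Positive₂(LimSupAvg ≤ 1-c)`. -/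
theorem stmt5 (G : CGS) :
    (G.Xstar = G.Almost1 (G.evLimInfAvgGe 1) ∧
      G.Xstar = G.Almost1 (G.evLimSupAvgGe 1) ∧
      G.Xstar = ⋂ ε > (0 : ℝ), G.Almost1 (G.evLimInfAvgGe (1 - ε)) ∧
      G.Xstar = ⋂ ε > (0 : ℝ), G.Almost1 (G.evLimSupAvgGe (1 - ε))) ∧
    ((G.Xstar)ᶜ = G.Positive2 (G.evLimInfAvgLt 1) ∧
      (G.Xstar)ᶜ = G.Positive2 (G.evLimSupAvgLt 1) ∧
      (G.Xstar)ᶜ = ⋃ c > (0 : ℝ), G.Positive2 (G.evLimInfAvgLe (1 - c)) ∧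
      (G.Xstar)ᶜ = ⋃ c > (0 : ℝ), G.Positive2 (G.evLimSupAvgLe (1 - c))) := by
  obtain ⟨c, hc, σ2, hσ2⟩ := CGS.exists_spoiling G
  have hwin : G.Xstar ⊆ G.Almost1 (G.evLimInfAvgGe 1) := by
    obtain ⟨σ1, h1⟩ := CGS.exists_winning G
    refine fun s hs => ⟨σ1, fun σ2 => le_antisymm (CGS.pr_le_one _ _ _ _) ?_⟩
    have := CGS.one_le_pr_add_compl σ1 σ2 s (G.evLimInfAvgGe 1)
    rwa [h1 s hs σ2, add_zero] at this
  have hspoil : (G.Xstar)ᶜ ⊆ G.Positive2 (G.evLimSupAvgLe (1 - c)) := fun s hs =>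
    ⟨σ2, fun σ1 => (pos_iff_ne_zero.2 (hσ2 s hs σ1)).trans_le
      (CGS.pr_mono _ _ _ fun ρ hρ => CGS.limSupAvg_le_of_mem_evLoss hρ)⟩
  have hIS : ∀ l, G.evLimInfAvgGe l ⊆ G.evLimSupAvgGe l := fun l ρ h =>
    le_trans h (CGS.limInfAvg_le_limSupAvg ρ)
  have hI : ∀ ε > (0 : ℝ), G.evLimInfAvgGe 1 ⊆ G.evLimInfAvgGe (1 - ε) := fun ε hε ρ h =>
    le_trans (sub_le_self 1 (le_of_lt hε)) h
  have hS : ∀ ε > (0 : ℝ), G.evLimSupAvgGe 1 ⊆ G.evLimSupAvgGe (1 - ε) := fun ε hε ρ h =>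
    le_trans (sub_le_self 1 (le_of_lt hε)) h
  have hlose : G.Almost1 (G.evLimSupAvgGe (1 - c / 2)) ⊆ G.Xstar :=
    CGS.Almost1_subset_of_disjoint hσ2 (CGS.measurableSet_evLimSupAvgGe _) fun ρ hρ h => by
      have h1 := CGS.limSupAvg_le_of_mem_evLoss hρ
      have h2 : 1 - c / 2 ≤ G.limSupAvg ρ := h
      linarith
  have hc2 : c / 2 > 0 := half_pos hc
  refine ⟨⟨?_, ?_, ?_, ?_⟩, ?_, ?_, ?_, ?_⟩
  · refine hwin.antisymm (Set.Subset.trans (CGS.Almost1_mono ?_) hlose)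
    exact (hI _ hc2).trans (hIS _)
  · exact (hwin.trans (CGS.Almost1_mono (hIS 1))).antisymm
      (Set.Subset.trans (CGS.Almost1_mono (hS _ hc2)) hlose)
  · refine Set.Subset.antisymm (Set.subset_iInter₂ fun ε hε =>
      hwin.trans (CGS.Almost1_mono (hI ε hε))) ?_
    exact (Set.iInter₂_subset (c / 2) hc2).trans ((CGS.Almost1_mono (hIS _)).trans hlose)
  · refine Set.Subset.antisymm (Set.subset_iInter₂ fun ε hε =>
      hwin.trans (CGS.Almost1_mono ((hI ε hε).trans (hIS _)))) ?_
    exact (Set.iInter₂_subset (c / 2) hc2).trans hlose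
  · refine Set.Subset.antisymm (hspoil.trans (CGS.Positive2_mono fun ρ h => ?_))
      (CGS.Positive2_subset fun ρ (h : G.limInfAvg ρ < 1) (h' : 1 ≤ G.limInfAvg ρ) =>
        absurd h' (not_le.2 h))
    have h1 : G.limSupAvg ρ ≤ 1 - c := h
    have h2 := CGS.limInfAvg_le_limSupAvg ρ
    show G.limInfAvg ρ < 1
    linarith
  · refine Set.Subset.antisymm (hspoil.trans (CGS.Positive2_mono fun ρ h => ?_))
      (CGS.Positive2_subset fun ρ (h : G.limSupAvg ρ < 1) (h' : 1 ≤ G.limInfAvg ρ) =>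
        absurd h' (not_le.2 ((CGS.limInfAvg_le_limSupAvg ρ).trans_lt h)))
    have h1 : G.limSupAvg ρ ≤ 1 - c := h
    show G.limSupAvg ρ < 1
    linarith
  · refine Set.Subset.antisymm (fun s hs => Set.mem_iUnion₂.2 ⟨c, hc,
      CGS.Positive2_mono (fun ρ h => (CGS.limInfAvg_le_limSupAvg ρ).trans h) (hspoil hs)⟩)
      (Set.iUnion₂_subset fun c' hc' => CGS.Positive2_subset fun ρ h h' => ?_)
    have h1 : G.limInfAvg ρ ≤ 1 - c' := h
    have h2 : 1 ≤ G.limInfAvg ρ := h'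
    linarith
  · refine Set.Subset.antisymm (fun s hs => Set.mem_iUnion₂.2 ⟨c, hc, hspoil hs⟩)
      (Set.iUnion₂_subset fun c' hc' => CGS.Positive2_subset fun ρ h h' => ?_)
    have h1 : G.limSupAvg ρ ≤ 1 - c' := h
    have h2 : 1 ≤ G.limInfAvg ρ := h'
    have h3 := CGS.limInfAvg_le_limSupAvg ρ
    linarith
end

section
/- Let V be a set, R a binary relation on V such that every v∈V has only finitely many R-successors, and v₀∈V. If the set of vertices reachable from v₀ under R is infinite, then for every natural number T there exists a vertex that is reachable from v₀ by an R-path of length T but by no R-path of length less than T; consequently, for every T, the set of vertices reachable from v₀ by R-paths of length at most T has at least T+1 elements. -/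
/-!
Finite out-degree makes each ball (vertices reachable in at most `T` steps) finite, so an infinite
reachable set contains a vertex `w` outside the ball of radius `T`. On a shortest path to `w` the
`T`-th vertex is at distance exactly `T`: a shorter route to it could be spliced with the rest of
the path (`reachLen_trans`) to shorten the path to `w`. Choosing one vertex at each distance
`0, …, T` gives `T + 1` distinct elements of the ball.
-/

/-- `reachLen R v0 k w`: there is an `R`-path of length `k` from `v0` to `w`. -/
def reachLen {V : Type*} (R : V → V → Prop) (v0 : V) (k : ℕ) (w : V) : Prop :=
  ∃ f : ℕ → V, f 0 = v0 ∧ f k = w ∧ ∀ i < k, R (f i) (f (i + 1))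

theorem reachLen_trans {V : Type*} {R : V → V → Prop} {a b c : V} {m n : ℕ}
    (hab : reachLen R a m b) (hbc : reachLen R b n c) : reachLen R a (m + n) c := by
  obtain ⟨f, hf0, hfm, hf⟩ := hab
  obtain ⟨g, hg0, hgn, hg⟩ := hbc
  refine ⟨fun i => if i ≤ m then f i else g (i - m), by simpa using hf0, ?_, ?_⟩
  · rcases Nat.eq_zero_or_pos n with rfl | hn
    · simp [hfm, ← hgn, hg0]
    · have : ¬ m + n ≤ m := by omega
      simp [this, hgn]
  · intro i hi
    rcases lt_trichotomy i m with h | rfl | h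
    · simpa [h.le, Nat.succ_le_of_lt h] using hf i h
    · simpa [hfm, hg0] using hg 0 (by omega)
    · have h1 : ¬ i ≤ m := by omega
      have h2 : ¬ i + 1 ≤ m := by omega
      have h3 : i + 1 - m = i - m + 1 := by omega
      simpa [h1, h2, h3] using hg (i - m) (by omega)

theorem finite_reachLen {V : Type*} {R : V → V → Prop} (hfin : ∀ v, {w | R v w}.Finite)
    (v0 : V) (k : ℕ) : {w | reachLen R v0 k w}.Finite := by
  induction k with
  | zero =>
    refine (Set.finite_singleton v0).subset ?_
    rintro w ⟨f, h0, hw, -⟩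
    exact hw.symm.trans h0
  | succ k ih =>
    refine (ih.biUnion fun v _ => hfin v).subset ?_
    rintro w ⟨f, h0, hw, hf⟩
    simp only [Set.mem_iUnion]
    exact ⟨f k, ⟨f, h0, rfl, fun i hi => hf i (by omega)⟩, hw ▸ hf k (by omega)⟩

theorem finite_ball {V : Type*} {R : V → V → Prop} (hfin : ∀ v, {w | R v w}.Finite)
    (v0 : V) (T : ℕ) : {w | ∃ k ≤ T, reachLen R v0 k w}.Finite := by
  refine ((Set.finite_Iic T).biUnion fun k _ => finite_reachLen hfin v0 k).subset ?_
  rintro w ⟨k, hk, hw⟩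
  simp only [Set.mem_iUnion]
  exact ⟨k, hk, hw⟩

theorem exists_reachLen_minimal {V : Type*} {R : V → V → Prop} (hfin : ∀ v, {w | R v w}.Finite)
    (v0 : V) (hinf : {w | ∃ k, reachLen R v0 k w}.Infinite) (T : ℕ) :
    ∃ w, reachLen R v0 T w ∧ ∀ k < T, ¬ reachLen R v0 k w := by
  classical
  obtain ⟨w, hw, hwT⟩ := hinf.exists_notMem_finite (finite_ball hfin v0 T)
  have hw' : ∃ k, reachLen R v0 k w := hw
  obtain ⟨f, h0, hn, hf⟩ := Nat.find_spec hw'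
  have hmin : ∀ m < Nat.find hw', ¬ reachLen R v0 m w := fun m => Nat.find_min hw'
  have hT : T < Nat.find hw' := by
    by_contra! h
    exact hwT ⟨_, h, Nat.find_spec hw'⟩
  generalize Nat.find hw' = n at *
  refine ⟨f T, ⟨f, h0, rfl, fun i hi => hf i (by omega)⟩, fun k hk hreach => ?_⟩
  have htail : reachLen R (f T) (n - T) w := by
    refine ⟨fun i => f (T + i), rfl, ?_, fun i hi => hf (T + i) (by omega)⟩
    simpa [Nat.add_sub_cancel' hT.le] using hn
  exact hmin _ (by omega) (reachLen_trans hreach htail)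

/-- If every vertex has finitely many `R`-successors and the set of
vertices reachable from `v0` is infinite, then for every `T` there is a vertex
reachable by a path of length `T` but by no shorter path, and consequently the set
of vertices reachable by paths of length at most `T` has at least `T + 1`
elements. -/
theorem stmt7 {V : Type*} (R : V → V → Prop) (hfin : ∀ v, {w | R v w}.Finite)
    (v0 : V) (hinf : {w | ∃ k, reachLen R v0 k w}.Infinite) :
    (∀ T : ℕ, ∃ w, reachLen R v0 T w ∧ ∀ k < T, ¬ reachLen R v0 k w) ∧
    (∀ T : ℕ, T + 1 ≤ {w | ∃ k ≤ T, reachLen R v0 k w}.ncard) := by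
  have hex := exists_reachLen_minimal hfin v0 hinf
  refine ⟨hex, fun T => ?_⟩
  choose g hg hgmin using hex
  have hinj : Function.Injective g := by
    intro a b hab
    rcases lt_trichotomy a b with h | h | h
    · exact absurd (hab ▸ hg a) (hgmin b a h)
    · exact h
    · exact absurd (hab ▸ hg b) (hgmin a b h)
  calc T + 1 = (g '' Set.Iic T).ncard := by
        rw [Set.ncard_image_of_injective _ hinj, ← Finset.coe_Iic, Set.ncard_coe_finset,
          Nat.card_Iic]
    _ ≤ _ := Set.ncard_le_ncard (by rintro _ ⟨k, hk, rfl⟩; exact ⟨k, hk, hg k⟩)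
        (finite_ball hfin v0 T)
end
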